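/- arXiv:1609.09378 — 7 statements merged into one kernel-verified Lean document; each statement's English description precedes it below -/
import Mathlib

section
/- Let V be a separable real Hilbert space, γ > 0, d ∈ V, and f : V → [0,∞] any function. Then (i) the Legendre transform of x ↦ f(x) + (γ/2)‖x−d‖² is y ↦ S_γ(f)(y/γ + d) + (γ/2)‖y/γ + d‖² − (γ/2)‖d‖²; (ii) the Legendre transform of y ↦ S_γ(f)(y/γ + d) + (γ/2)‖y/γ + d‖² − (γ/2)‖d‖² is x ↦ S_γ²(f)(x) + (γ/2)‖x−d‖². Consequently, x ↦ S_γ²(f)(x) + (γ/2)‖x−d‖² is the lower semicontinuous convex envelope of x ↦ f(x) + (γ/2)‖x−d‖², and 0 ≤ S_γ²(f) ≤ f pointwise. -/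
open scoped InnerProductSpace RealInnerProductSpace ENNReal Topology
open Filter

noncomputable section

/-- The S-transform `S_γ(f)(y) = sup_x ( -f(x) - (γ/2)‖x-y‖² )` for
extended-real-valued functions on a real inner product space. -/
def SgammaE {V : Type*} [NormedAddCommGroup V] [InnerProductSpace ℝ V]
    (γ : ℝ) (f : V → EReal) (y : V) : EReal :=
  ⨆ x : V, (-(f x) - (((γ / 2) * ‖x - y‖ ^ 2 : ℝ) : EReal))

/-- The S-transform of a `[0,∞]`-valued function. -/
def Sgamma {V : Type*} [NormedAddCommGroup V] [InnerProductSpace ℝ V]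
    (γ : ℝ) (f : V → ℝ≥0∞) (y : V) : EReal :=
  SgammaE γ (fun x => (f x : EReal)) y

/-- The twice iterated S-transform `S_γ²(f) = S_γ(S_γ(f))`. -/
def Sgamma2 {V : Type*} [NormedAddCommGroup V] [InnerProductSpace ℝ V]
    (γ : ℝ) (f : V → ℝ≥0∞) : V → EReal :=
  SgammaE γ (Sgamma γ f)

/-- The Legendre transform (Fenchel conjugate). -/
def legendre {V : Type*} [NormedAddCommGroup V] [InnerProductSpace ℝ V]
    (g : V → EReal) (y : V) : EReal :=
  ⨆ x : V, (((⟪x, y⟫_ℝ : ℝ) : EReal) - g x)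

/-- Convexity for extended-real-valued functions. -/
def EConvexOn {V : Type*} [NormedAddCommGroup V] [InnerProductSpace ℝ V]
    (h : V → EReal) : Prop :=
  ∀ x y : V, ∀ a b : ℝ, 0 ≤ a → 0 ≤ b → a + b = 1 →
    h (a • x + b • y) ≤ (a : EReal) * h x + (b : EReal) * h y

/-- `h` is the lower semicontinuous convex envelope of `g`: the largest
l.s.c. convex function below `g`. -/
def IsLscConvexEnvelope {V : Type*} [NormedAddCommGroup V] [InnerProductSpace ℝ V]
    (g h : V → EReal) : Prop :=
  LowerSemicontinuous h ∧ EConvexOn h ∧ (∀ x, h x ≤ g x) ∧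
    ∀ h' : V → EReal, LowerSemicontinuous h' → EConvexOn h' → (∀ x, h' x ≤ g x) →
      ∀ x, h' x ≤ h x

theorem EReal.iSup_add_coe {ι : Sort*} (u : ι → EReal) (c : ℝ) :
    (⨆ i, u i) + (c : EReal) = ⨆ i, (u i + (c : EReal)) := by
  apply le_antisymm
  · rw [← EReal.le_sub_iff_add_le (by simp) (by simp)]
    refine iSup_le fun i => ?_
    rw [EReal.le_sub_iff_add_le (by simp) (by simp)]
    exact le_iSup (fun i => u i + (c : EReal)) i
  · exact iSup_le fun i => add_le_add_left (le_iSup u i) _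

section Legendre

variable {V : Type*} [NormedAddCommGroup V] [InnerProductSpace ℝ V]

theorem lowerSemicontinuous_legendre (k : V → EReal) : LowerSemicontinuous (legendre k) := by
  refine lowerSemicontinuous_iSup fun z => ?_
  induction k z with
  | bot => simpa using lowerSemicontinuous_const
  | top => simpa using lowerSemicontinuous_const
  | coe r =>
    simp only [← EReal.coe_sub]
    exact (continuous_coe_real_ereal.comp (by fun_prop)).lowerSemicontinuous

theorem eConvexOn_legendre (k : V → EReal) : EConvexOn (legendre k) := by
  intro x y a b ha hb hab
  have ha' : (0 : EReal) ≤ a := by exact_mod_cast ha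
  have hb' : (0 : EReal) ≤ b := by exact_mod_cast hb
  refine iSup_le fun z => ?_
  have hx := le_iSup (fun z : V => ((⟪z, x⟫_ℝ : ℝ) : EReal) - k z) z
  have hy := le_iSup (fun z : V => ((⟪z, y⟫_ℝ : ℝ) : EReal) - k z) z
  refine le_trans ?_ (add_le_add (mul_le_mul_of_nonneg_left hx ha')
    (mul_le_mul_of_nonneg_left hy hb'))
  induction k z with
  | top => simp
  | bot =>
    rcases ha.eq_or_lt with rfl | ha
    · obtain rfl : b = 1 := by linarith
      simp
    · rcases hb.eq_or_lt with rfl | hb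
      · obtain rfl : a = 1 := by linarith
        simp
      · simp [EReal.coe_mul_top_of_pos, ha, hb]
  | coe r =>
    norm_cast
    rw [inner_add_right, inner_smul_right, inner_smul_right]
    obtain rfl : b = 1 - a := by linarith
    apply le_of_eq
    ring

theorem EConvexOn.max_zero {h : V → EReal} (hh : EConvexOn h) :
    EConvexOn (fun x => max (h x) 0) := by
  intro x y a b ha hb hab
  have ha' : (0 : EReal) ≤ a := by exact_mod_cast ha
  have hb' : (0 : EReal) ≤ b := by exact_mod_cast hb
  refine max_le ((hh x y a b ha hb hab).trans ?_) ?_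
  · exact add_le_add (mul_le_mul_of_nonneg_left (le_max_left _ _) ha')
      (mul_le_mul_of_nonneg_left (le_max_left _ _) hb')
  · exact add_nonneg (mul_nonneg ha' (le_max_right _ _)) (mul_nonneg hb' (le_max_right _ _))

theorem EConvexOn.convex_epigraph {h : V → EReal} (hh : EConvexOn h) :
    Convex ℝ {q : V × ℝ | h q.1 ≤ (q.2 : EReal)} := by
  rintro ⟨x, s⟩ hx ⟨y, t⟩ hy a b ha hb hab
  have ha' : (0 : EReal) ≤ a := by exact_mod_cast ha
  have hb' : (0 : EReal) ≤ b := by exact_mod_cast hb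
  simp only [Set.mem_ofPred_eq] at hx hy
  refine (hh x y a b ha hb hab).trans ?_
  refine (add_le_add (mul_le_mul_of_nonneg_left hx ha')
    (mul_le_mul_of_nonneg_left hy hb')).trans (le_of_eq ?_)
  simp

theorem LowerSemicontinuous.isClosed_epigraph_coe {X : Type*} [TopologicalSpace X]
    {h : X → EReal} (hh : LowerSemicontinuous h) :
    IsClosed {q : X × ℝ | h q.1 ≤ (q.2 : EReal)} :=
  hh.isClosed_epigraph.preimage (f := fun q : X × ℝ => (q.1, (q.2 : EReal)))
    (continuous_fst.prodMk (continuous_coe_real_ereal.comp continuous_snd))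

/-- A nonnegative l.s.c. convex function is the supremum of its continuous affine minorants. -/
theorem exists_affine_minorant [CompleteSpace V] {p : V → EReal} (hlsc : LowerSemicontinuous p)
    (hconv : EConvexOn p) (hp : ∀ x, 0 ≤ p x) {x₀ : V} {t : ℝ} (ht : (t : EReal) < p x₀) :
    ∃ (z : V) (c : ℝ), (∀ x, ((⟪x, z⟫_ℝ - c : ℝ) : EReal) ≤ p x) ∧ t < ⟪x₀, z⟫_ℝ - c := by
  set E : Set (V × ℝ) := {q : V × ℝ | p q.1 ≤ (q.2 : EReal)}
  obtain hempty | ⟨⟨x₁, s₁⟩, h₁⟩ := E.eq_empty_or_nonempty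
  · refine ⟨0, -t - 1, fun x => ?_, by simp⟩
    by_contra hlt
    have : (x, (⟪x, (0 : V)⟫_ℝ - (-t - 1) : ℝ)) ∈ E := (not_le.1 hlt).le
    simp [hempty] at this
  obtain ⟨φ, u, hφ, hu⟩ := geometric_hahn_banach_point_closed (x := (x₀, t))
    hconv.convex_epigraph hlsc.isClosed_epigraph_coe (by simpa using ht)
  set α : ℝ := φ (0, 1) with hα
  have hsplit : ∀ (x : V) (s : ℝ), φ (x, s) = φ (x, 0) + s * α := by
    intro x s
    rw [hα, ← smul_eq_mul, ← map_smul, ← map_add]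
    simp
  have hα0 : 0 ≤ α := by
    by_contra! hneg
    obtain ⟨n, hn⟩ := exists_nat_gt ((φ (x₁, s₁) - u) / (-α))
    rw [div_lt_iff₀ (by linarith)] at hn
    have hmem : (x₁, s₁ + n) ∈ E := by
      refine le_trans (show p x₁ ≤ (s₁ : EReal) from h₁) ?_
      exact EReal.coe_le_coe_iff.2 (by simp)
    have := hu _ hmem
    rw [hsplit] at this hn
    nlinarith
  obtain ⟨ε, hε, hεt⟩ : ∃ ε : ℝ, 0 < ε ∧ φ (x₀, t) + ε * t < u := by
    refine ⟨(u - φ (x₀, t)) / (2 * (|t| + 1)), div_pos (by linarith) (by positivity), ?_⟩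
    have h1 : 0 < |t| + 1 := by positivity
    have h2 : t ≤ |t| + 1 := by linarith [le_abs_self t]
    have h3 : (u - φ (x₀, t)) / (2 * (|t| + 1)) * t
        ≤ (u - φ (x₀, t)) / (2 * (|t| + 1)) * (|t| + 1) :=
      mul_le_mul_of_nonneg_left h2 (div_nonneg (by linarith) (by linarith))
    have h4 : (u - φ (x₀, t)) / (2 * (|t| + 1)) * (|t| + 1) = (u - φ (x₀, t)) / 2 := by
      field_simp
    linarith
  have hβ : 0 < α + ε := by linarith
  set ℓ : StrongDual ℝ V := φ.comp (ContinuousLinearMap.inl ℝ V ℝ)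
  have hinner : ∀ x, ⟪x, -((α + ε)⁻¹ • (InnerProductSpace.toDual ℝ V).symm ℓ)⟫_ℝ - (-(u / (α + ε)))
      = (u - φ (x, 0)) / (α + ε) := by
    intro x
    rw [inner_neg_right, inner_smul_right, real_inner_comm, InnerProductSpace.toDual_symm_apply]
    simp only [ℓ, ContinuousLinearMap.comp_apply, ContinuousLinearMap.inl_apply]
    field_simp
    ring
  refine ⟨-((α + ε)⁻¹ • (InnerProductSpace.toDual ℝ V).symm ℓ), -(u / (α + ε)), fun x => ?_, ?_⟩
  · rw [hinner]
    refine EReal.le_of_forall_lt_iff_le.1 fun s hs => ?_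
    have hs0 : 0 ≤ s := by exact_mod_cast (hp x).trans hs.le
    have := hu (x, s) hs.le
    rw [hsplit] at this
    rw [EReal.coe_le_coe_iff, div_le_iff₀ hβ]
    nlinarith
  · rw [hinner, lt_div_iff₀ hβ]
    rw [hsplit] at hεt
    linarith

/-- The biconjugate dominates each l.s.c. convex minorant of a nonnegative function. -/
theorem le_legendre_legendre [CompleteSpace V] {g h : V → EReal} (hg : ∀ x, 0 ≤ g x)
    (hlsc : LowerSemicontinuous h) (hconv : EConvexOn h) (hle : ∀ x, h x ≤ g x) (x : V) :
    h x ≤ legendre (legendre g) x := by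
  refine EReal.ge_of_forall_gt_iff_ge.1 fun t ht => ?_
  obtain ⟨z, c, hz, hzt⟩ := exists_affine_minorant
    (hlsc.sup lowerSemicontinuous_const) hconv.max_zero (fun x => le_max_right (h x) 0)
    (lt_max_of_lt_left ht)
  have hc : legendre g z ≤ c := by
    refine iSup_le fun y => ?_
    have hy := (hz y).trans (max_le (hle y) (hg y))
    rw [EReal.sub_le_iff_le_add (by simp) (by simp)]
    rw [EReal.coe_sub, EReal.sub_le_iff_le_add (by simp) (by simp)] at hy
    rwa [add_comm]
  calc (t : EReal) ≤ ((⟪x, z⟫_ℝ - c : ℝ) : EReal) := by exact_mod_cast hzt.le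
    _ = ((⟪z, x⟫_ℝ : ℝ) : EReal) - c := by rw [EReal.coe_sub, real_inner_comm]
    _ ≤ ((⟪z, x⟫_ℝ : ℝ) : EReal) - legendre g z := EReal.sub_le_sub le_rfl hc
    _ ≤ legendre (legendre g) x :=
      le_iSup (fun z : V => ((⟪z, x⟫_ℝ : ℝ) : EReal) - legendre g z) z

end Legendre

section STransform

variable {V : Type*} [NormedAddCommGroup V] [InnerProductSpace ℝ V] {γ : ℝ}

theorem legendre_add_sq (hγ : 0 < γ) (d : V) (k : V → EReal) (y : V) :
    legendre (fun x => k x + ((γ / 2 * ‖x - d‖ ^ 2 : ℝ) : EReal)) y =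
      SgammaE γ k (γ⁻¹ • y + d) + ((γ / 2 * ‖γ⁻¹ • y + d‖ ^ 2 : ℝ) : EReal)
        - ((γ / 2 * ‖d‖ ^ 2 : ℝ) : EReal) := by
  rw [SgammaE, EReal.iSup_add_coe, sub_eq_add_neg, ← EReal.coe_neg, EReal.iSup_add_coe, legendre]
  congr 1 with x
  induction k x with
  | top => simp [-EReal.coe_mul]
  | bot => simp [-EReal.coe_mul]
  | coe r =>
    norm_cast
    have h1 := norm_sub_sq_real x d
    have h2 := norm_sub_sq_real x (γ⁻¹ • y + d)
    rw [inner_add_right, inner_smul_right] at h2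
    rw [h1, h2]
    field_simp
    ring

theorem legendre_comp_add_sq (hγ : 0 < γ) (d : V) (k : V → EReal) (x : V) :
    legendre (fun y => k (γ⁻¹ • y + d) + ((γ / 2 * ‖γ⁻¹ • y + d‖ ^ 2 : ℝ) : EReal)
        - ((γ / 2 * ‖d‖ ^ 2 : ℝ) : EReal)) x =
      SgammaE γ k x + ((γ / 2 * ‖x - d‖ ^ 2 : ℝ) : EReal) := by
  have hsurj : Function.Surjective fun y : V => γ⁻¹ • y + d := fun w =>
    ⟨γ • (w - d), by simp [smul_smul, hγ.ne']⟩
  rw [SgammaE, EReal.iSup_add_coe, ← hsurj.iSup_comp, legendre]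
  congr 1 with y
  induction k (γ⁻¹ • y + d) with
  | top => simp [-EReal.coe_mul]
  | bot => simp [-EReal.coe_mul]
  | coe r =>
    norm_cast
    have h1 := norm_sub_sq_real x d
    have h2 := norm_sub_sq_real (γ⁻¹ • y + d) x
    rw [inner_add_left, inner_smul_left, real_inner_comm x d] at h2
    rw [h1, h2]
    simp only [conj_trivial]
    field_simp
    ring

theorem SgammaE_SgammaE_le (k : V → EReal) (x : V) : SgammaE γ (SgammaE γ k) x ≤ k x := by
  refine iSup_le fun y => ?_
  have h := le_iSup (fun x : V => -(k x) - (((γ / 2) * ‖x - y‖ ^ 2 : ℝ) : EReal)) x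
  refine (EReal.sub_le_sub (EReal.neg_le_neg_iff.2 h) le_rfl).trans (le_of_eq ?_)
  rw [norm_sub_rev y x]
  induction k x with
  | top => simp [-EReal.coe_mul]
  | bot => simp [-EReal.coe_mul]
  | coe r =>
    norm_cast
    ring

theorem SgammaE_nonpos (hγ : 0 ≤ γ) {k : V → EReal} (hk : ∀ x, 0 ≤ k x) (y : V) :
    SgammaE γ k y ≤ 0 := by
  refine iSup_le fun x => ?_
  have h : (0 : EReal) ≤ ((γ / 2 * ‖x - y‖ ^ 2 : ℝ) : EReal) := by
    exact_mod_cast (by positivity : (0 : ℝ) ≤ γ / 2 * ‖x - y‖ ^ 2)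
  simpa using EReal.sub_le_sub (EReal.neg_le_neg_iff.2 (hk x)) h

theorem SgammaE_nonneg {k : V → EReal} (hk : ∀ x, k x ≤ 0) (y : V) : 0 ≤ SgammaE γ k y := by
  refine le_trans ?_
    (le_iSup (fun x : V => -(k x) - (((γ / 2) * ‖x - y‖ ^ 2 : ℝ) : EReal)) y)
  simpa using hk y

end STransform

/-- The Legendre transform of `x ↦ f(x) + (γ/2)‖x-d‖²` is
`y ↦ S_γ(f)(y/γ + d) + (γ/2)‖y/γ + d‖² - (γ/2)‖d‖²`, the Legendre transform of the latter is
`x ↦ S_γ²(f)(x) + (γ/2)‖x-d‖²`; consequently `x ↦ S_γ²(f)(x) + (γ/2)‖x-d‖²` is the l.s.c. convex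
envelope of `x ↦ f(x) + (γ/2)‖x-d‖²`, and `0 ≤ S_γ²(f) ≤ f`. -/
theorem statement0 {V : Type*} [NormedAddCommGroup V] [InnerProductSpace ℝ V]
    [CompleteSpace V] [TopologicalSpace.SeparableSpace V]
    (γ : ℝ) (hγ : 0 < γ) (d : V) (f : V → ℝ≥0∞) :
    (∀ y : V,
      legendre (fun x => (f x : EReal) + ((γ / 2 * ‖x - d‖ ^ 2 : ℝ) : EReal)) y =
        Sgamma γ f (γ⁻¹ • y + d) + ((γ / 2 * ‖γ⁻¹ • y + d‖ ^ 2 : ℝ) : EReal)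
          - ((γ / 2 * ‖d‖ ^ 2 : ℝ) : EReal)) ∧
    (∀ x : V,
      legendre (fun y => Sgamma γ f (γ⁻¹ • y + d) + ((γ / 2 * ‖γ⁻¹ • y + d‖ ^ 2 : ℝ) : EReal)
          - ((γ / 2 * ‖d‖ ^ 2 : ℝ) : EReal)) x =
        Sgamma2 γ f x + ((γ / 2 * ‖x - d‖ ^ 2 : ℝ) : EReal)) ∧
    IsLscConvexEnvelope (fun x => (f x : EReal) + ((γ / 2 * ‖x - d‖ ^ 2 : ℝ) : EReal))
      (fun x => Sgamma2 γ f x + ((γ / 2 * ‖x - d‖ ^ 2 : ℝ) : EReal)) ∧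
    (∀ x : V, 0 ≤ Sgamma2 γ f x ∧ Sgamma2 γ f x ≤ (f x : EReal)) := by
  have hf : ∀ x, (0 : EReal) ≤ (f x : EReal) := fun x => EReal.coe_ennreal_nonneg _
  have hconj := legendre_add_sq hγ d (fun x => (f x : EReal))
  have hbiconj := legendre_comp_add_sq hγ d (Sgamma γ f)
  have hle : ∀ x, Sgamma2 γ f x ≤ (f x : EReal) := SgammaE_SgammaE_le (fun x => (f x : EReal))
  refine ⟨hconj, hbiconj, ?_, fun x => ⟨SgammaE_nonneg (SgammaE_nonpos hγ.le hf) x, hle x⟩⟩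
  have henv : (fun x => Sgamma2 γ f x + ((γ / 2 * ‖x - d‖ ^ 2 : ℝ) : EReal)) =
      legendre (legendre (fun x => (f x : EReal) + ((γ / 2 * ‖x - d‖ ^ 2 : ℝ) : EReal))) := by
    rw [funext hconj]
    exact (funext hbiconj).symm
  refine ⟨?_, ?_, fun x => add_le_add_left (hle x) _, ?_⟩
  · rw [henv]
    exact lowerSemicontinuous_legendre _
  · rw [henv]
    exact eConvexOn_legendre _
  · intro h' hlsc hconv hh' x
    rw [henv]
    refine le_legendre_legendre (fun x => add_nonneg (hf x) ?_) hlsc hconv hh' x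
    exact_mod_cast (by positivity : (0 : ℝ) ≤ γ / 2 * ‖x - d‖ ^ 2)
end
end

section
/- Let f : V → [0,∞] be a lower semicontinuous function on a separable real Hilbert space V which is not identically +∞, and let γ > 0. Then S_γ(f) takes values in (−∞,0] and is continuous on V, whereas S_γ²(f) takes values in [0,∞], is lower semicontinuous, and is continuous on the interior of dom(S_γ²(f)) = {x : S_γ²(f)(x) < ∞}. -/
open scoped InnerProductSpace RealInnerProductSpace ENNReal Topology
open Filter

noncomputable section

/-- In a Baire normed space, a convex function that is lower semicontinuous on an open set is
continuous there. -/
theorem ConvexOn.continuousOn_of_lowerSemicontinuousOn {E : Type*} [NormedAddCommGroup E]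
    [NormedSpace ℝ E] [BaireSpace E] {C : Set E} {g : E → ℝ} (hg : ConvexOn ℝ C g)
    (hC : IsOpen C) (hlsc : LowerSemicontinuousOn g C) : ContinuousOn g C := by
  rcases C.eq_empty_or_nonempty with rfl | hne
  · simp
  refine ((hg.continuousOn_tfae hC hne).out 3 1).mp ?_
  have hclosed (n : ℕ) : IsClosed {y | y ∈ C → g y ≤ n} := by
    rw [← isOpen_compl_iff, isOpen_iff_mem_nhds]
    intro y hy
    simp only [Set.mem_compl_iff, Set.mem_ofPred_eq, Classical.not_imp, not_le] at hy
    have h := hlsc y hy.1 n hy.2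
    rw [hC.nhdsWithin_eq hy.1] at h
    filter_upwards [h, hC.mem_nhds hy.1] with z hz hzC
    simpa using ⟨hzC, hz⟩
  have hcover : ⋃ n : ℕ, {y | y ∈ C → g y ≤ n} = Set.univ := by
    refine Set.eq_univ_of_forall fun y => Set.mem_iUnion.2 ?_
    obtain ⟨n, hn⟩ := exists_nat_ge (g y)
    exact ⟨n, fun _ => hn⟩
  obtain ⟨y, hyC, hy⟩ :=
    (dense_iUnion_interior_of_closed hclosed hcover).inter_open_nonempty C hC hne
  obtain ⟨n, hn⟩ := Set.mem_iUnion.1 hy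
  refine ⟨y, hyC, n, ?_⟩
  rw [eventually_map]
  filter_upwards [mem_interior_iff_mem_nhds.1 hn, hC.mem_nhds hyC] with z hz hzC
  exact hz hzC

section STransform

variable {V : Type*} [NormedAddCommGroup V] [InnerProductSpace ℝ V]

theorem le_SgammaE (γ : ℝ) (h : V → EReal) (x y : V) :
    -(h x) - (((γ / 2) * ‖x - y‖ ^ 2 : ℝ) : EReal) ≤ SgammaE γ h y :=
  le_iSup (fun x : V => -(h x) - (((γ / 2) * ‖x - y‖ ^ 2 : ℝ) : EReal)) x

theorem neg_le_SgammaE (γ : ℝ) (h : V → EReal) (x : V) : -(h x) ≤ SgammaE γ h x := by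
  simpa using le_SgammaE γ h x x

theorem lowerSemicontinuous_SgammaE (γ : ℝ) (h : V → EReal) :
    LowerSemicontinuous (SgammaE γ h) := by
  refine lowerSemicontinuous_iSup fun x => Continuous.lowerSemicontinuous ?_
  induction -(h x) with
  | bot => simpa using continuous_const
  | top => simpa only [EReal.top_sub_coe] using continuous_const
  | coe c =>
    simp only [← EReal.coe_sub]
    exact continuous_coe_real_ereal.comp (by fun_prop)

theorem norm_sub_convexCombo_sq (x y z : V) {a b : ℝ} (hab : a + b = 1) :
    ‖x - (a • y + b • z)‖ ^ 2 - ‖a • y + b • z‖ ^ 2 =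
      a * (‖x - y‖ ^ 2 - ‖y‖ ^ 2) + b * (‖x - z‖ ^ 2 - ‖z‖ ^ 2) := by
  simp only [norm_sub_sq_real, inner_add_right, inner_smul_right]
  linear_combination (-‖x‖ ^ 2) * hab

/-- Adding `(γ / 2) ‖·‖²` to an S-transform makes it convex wherever it is finite. -/
theorem convexOn_SgammaE_add (γ : ℝ) (h : V → EReal) {C : Set V} (hC : Convex ℝ C)
    (hbot : ∀ y ∈ C, SgammaE γ h y ≠ ⊥) (htop : ∀ y ∈ C, SgammaE γ h y ≠ ⊤) :
    ConvexOn ℝ C fun y => (SgammaE γ h y).toReal + (γ / 2) * ‖y‖ ^ 2 := by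
  refine ⟨hC, fun y hy z hz a b ha hb hab => ?_⟩
  have hw := hC hy hz ha hb hab
  simp only [smul_eq_mul]
  rw [← le_sub_iff_add_le, ← EReal.coe_le_coe_iff, EReal.coe_toReal (htop _ hw) (hbot _ hw)]
  refine iSup_le fun x => ?_
  have hxy := le_SgammaE γ h x y
  have hxz := le_SgammaE γ h x z
  rw [← EReal.coe_toReal (htop y hy) (hbot y hy)] at hxy
  rw [← EReal.coe_toReal (htop z hz) (hbot z hz)] at hxz
  generalize -(h x) = c at hxy hxz ⊢
  induction c with
  | bot => simp
  | top => exact absurd (top_le_iff.1 (EReal.top_sub_coe _ ▸ hxy)) (EReal.coe_ne_top _)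
  | coe c =>
    rw [← EReal.coe_sub, EReal.coe_le_coe_iff] at hxy hxz ⊢
    have hid := norm_sub_convexCombo_sq x y z hab
    have hc : c = a * c + b * c := by rw [← add_mul, hab, one_mul]
    have h₁ := mul_le_mul_of_nonneg_left hxy ha
    have h₂ := mul_le_mul_of_nonneg_left hxz hb
    linear_combination h₁ + h₂ - (γ / 2) * hid + hc

/-- An S-transform that never takes the value `⊥` is continuous on the interior of its domain. -/
theorem continuousOn_SgammaE [CompleteSpace V] (γ : ℝ) (h : V → EReal)
    (hbot : ∀ y, SgammaE γ h y ≠ ⊥) :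
    ContinuousOn (SgammaE γ h) (interior {x : V | SgammaE γ h x ≠ ⊤}) := by
  intro y hy
  obtain ⟨r, hr, hball⟩ := Metric.isOpen_iff.1 isOpen_interior y hy
  have htop : ∀ z ∈ Metric.ball y r, SgammaE γ h z ≠ ⊤ := fun z hz => interior_subset (hball hz)
  have hlsc : LowerSemicontinuousOn (fun z => (SgammaE γ h z).toReal) (Metric.ball y r) := by
    intro z hz m hm
    change m < (SgammaE γ h z).toReal at hm
    rw [← EReal.coe_lt_coe_iff, EReal.coe_toReal (htop z hz) (hbot z)] at hm
    filter_upwards [(lowerSemicontinuous_SgammaE γ h).lowerSemicontinuousOn _ z hz m hm,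
      self_mem_nhdsWithin] with w hw hwB
    change m < (SgammaE γ h w).toReal
    rwa [← EReal.coe_lt_coe_iff, EReal.coe_toReal (htop w hwB) (hbot w)]
  have hquad : Continuous fun z : V => (γ / 2) * ‖z‖ ^ 2 := by fun_prop
  have hcont := (convexOn_SgammaE_add γ h (convex_ball y r) (fun z _ => hbot z)
    htop).continuousOn_of_lowerSemicontinuousOn Metric.isOpen_ball
      (hlsc.add (hquad.lowerSemicontinuous.lowerSemicontinuousOn _))
  have hreal : ContinuousOn (fun z => (SgammaE γ h z).toReal) (Metric.ball y r) := by
    simpa [Pi.sub_def] using hcont.sub hquad.continuousOn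
  have hcoe : ContinuousOn (SgammaE γ h) (Metric.ball y r) :=
    (continuous_coe_real_ereal.comp_continuousOn hreal).congr fun z hz =>
      (EReal.coe_toReal (htop z hz) (hbot z)).symm
  exact (hcoe.continuousAt (Metric.ball_mem_nhds y hr)).continuousWithinAt

theorem Sgamma_nonpos {γ : ℝ} (hγ : 0 ≤ γ) (f : V → ℝ≥0∞) (y : V) : Sgamma γ f y ≤ 0 := by
  refine iSup_le fun x => ?_
  have hf : -(f x : EReal) ≤ 0 := by simpa using EReal.coe_ennreal_nonneg (f x)
  have hq : (0 : EReal) ≤ (((γ / 2) * ‖x - y‖ ^ 2 : ℝ) : EReal) :=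
    EReal.coe_nonneg.2 (by positivity)
  simpa using EReal.sub_le_sub hf hq

theorem bot_lt_Sgamma (γ : ℝ) {f : V → ℝ≥0∞} (hproper : ∃ x, f x ≠ ∞) (y : V) :
    ⊥ < Sgamma γ f y := by
  obtain ⟨x, hx⟩ := hproper
  refine lt_of_lt_of_le ?_ (le_SgammaE γ (fun x => (f x : EReal)) x y)
  lift f x to NNReal using hx with c
  exact EReal.bot_lt_coe (-(c : ℝ) - (γ / 2) * ‖x - y‖ ^ 2)

end STransform

/-- For `f : V → [0,∞]` l.s.c. and not identically `+∞` and `γ > 0`: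
`S_γ(f)` takes values in `(-∞,0]` and is continuous, while `S_γ²(f)` takes values in `[0,∞]`,
is lower semicontinuous, and is continuous on the interior of its domain. -/
theorem statement1 {V : Type*} [NormedAddCommGroup V] [InnerProductSpace ℝ V]
    [CompleteSpace V] [TopologicalSpace.SeparableSpace V]
    (γ : ℝ) (hγ : 0 < γ) (f : V → ℝ≥0∞)
    (hlsc : LowerSemicontinuous f) (hproper : ∃ x, f x ≠ ∞) :
    (∀ y : V, ⊥ < Sgamma γ f y ∧ Sgamma γ f y ≤ 0) ∧
    Continuous (Sgamma γ f) ∧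
    (∀ x : V, 0 ≤ Sgamma2 γ f x) ∧
    LowerSemicontinuous (Sgamma2 γ f) ∧
    ContinuousOn (Sgamma2 γ f) (interior {x : V | Sgamma2 γ f x ≠ ⊤}) := by
  have hneg := Sgamma_nonpos hγ.le f
  have hbot := bot_lt_Sgamma γ hproper
  have hpos (x : V) : 0 ≤ Sgamma2 γ f x :=
    (EReal.neg_nonneg.2 (hneg x)).trans (neg_le_SgammaE γ (Sgamma γ f) x)
  refine ⟨fun y => ⟨hbot y, hneg y⟩, ?_, hpos, lowerSemicontinuous_SgammaE γ _,
    continuousOn_SgammaE γ _ fun x => (EReal.bot_lt_zero.trans_le (hpos x)).ne'⟩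
  have hdom : {x : V | Sgamma γ f x ≠ ⊤} = Set.univ :=
    Set.eq_univ_of_forall fun x => ((hneg x).trans_lt EReal.zero_lt_top).ne
  have hcont : ContinuousOn (Sgamma γ f) (interior {x : V | Sgamma γ f x ≠ ⊤}) :=
    continuousOn_SgammaE γ _ fun y => (hbot y).ne'
  rwa [hdom, interior_univ, continuousOn_univ] at hcont
end
end

section
/- Let (V_j)_{j=1}^{d}, where d ∈ ℕ ∪ {∞}, be separable real Hilbert spaces and let V = ⊕_{j=1}^{d} V_j be their Hilbert space direct sum. Suppose f_j : V_j → [0,∞] for each j, and define F(x) = Σ_{j=1}^{d} f_j(x_j) for x = ⊕_{j=1}^{d} x_j with x_j ∈ V_j (the sum taken in [0,∞]). Then for every y = ⊕_{j=1}^{d} y_j ∈ V and every γ > 0, S_{V,γ}(F)(y) = Σ_{j=1}^{d} S_{V_j,γ}(f_j)(y_j). -/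
open scoped InnerProductSpace RealInnerProductSpace ENNReal Topology
open Filter

noncomputable section

/-- The truncation of an extended real number to `[0,∞]`: negative values map to `0`,
`⊤` maps to `∞`. For nonpositive `x`, `erealToENNReal (-x)` recovers `-x` faithfully. -/
def erealToENNReal (x : EReal) : ℝ≥0∞ :=
  if x = ⊤ then ⊤ else ENNReal.ofReal x.toReal

/-- The infimal convolution of `f` with `(γ/2)‖·‖²`; it equals `-(Sgamma γ f)`. -/
def moreauEnvelope {V : Type*} [NormedAddCommGroup V]
    (γ : ℝ) (f : V → ℝ≥0∞) (y : V) : ℝ≥0∞ :=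
  ⨅ x : V, (f x + ENNReal.ofReal ((γ / 2) * ‖x - y‖ ^ 2))

theorem neg_coe_sub_coe_eq_neg_coe_add_ofReal (a : ℝ≥0∞) {r : ℝ} (hr : 0 ≤ r) :
    -(a : EReal) - (r : EReal) = -((a + ENNReal.ofReal r : ℝ≥0∞) : EReal) := by
  rw [EReal.coe_ennreal_add, EReal.coe_ennreal_ofReal, max_eq_left (by exact_mod_cast hr),
    EReal.neg_add (Or.inr (EReal.coe_ne_top r)) (Or.inr (EReal.coe_ne_bot r))]

theorem Sgamma_eq_neg_moreauEnvelope {V : Type*} [NormedAddCommGroup V] [InnerProductSpace ℝ V]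
    {γ : ℝ} (hγ : 0 ≤ γ) (f : V → ℝ≥0∞) (y : V) :
    Sgamma γ f y = -(moreauEnvelope γ f y : EReal) := by
  have hterm (x : V) : -(f x : EReal) - (((γ / 2) * ‖x - y‖ ^ 2 : ℝ) : EReal) =
      -((f x + ENNReal.ofReal ((γ / 2) * ‖x - y‖ ^ 2) : ℝ≥0∞) : EReal) :=
    neg_coe_sub_coe_eq_neg_coe_add_ofReal _ (by positivity)
  simp only [Sgamma, SgammaE, hterm]
  apply le_antisymm
  · refine iSup_le fun x => EReal.neg_le_neg_iff.2 ?_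
    exact EReal.coe_ennreal_le_coe_ennreal_iff.2 (iInf_le _ x)
  · refine EReal.neg_le.1 ?_
    set S : EReal := ⨆ x : V,
      -((f x + ENNReal.ofReal ((γ / 2) * ‖x - y‖ ^ 2) : ℝ≥0∞) : EReal)
    have hS : 0 ≤ -S := by
      refine EReal.le_neg_of_le_neg (iSup_le fun x => ?_)
      exact EReal.neg_le_neg_iff.2 (EReal.coe_ennreal_nonneg _)
    rw [← EReal.coe_toENNReal hS]
    refine EReal.coe_ennreal_le_coe_ennreal_iff.2 (le_iInf fun x => ?_)
    rw [← EReal.coe_ennreal_le_coe_ennreal_iff, EReal.coe_toENNReal hS]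
    exact EReal.neg_le.1 (le_iSup (fun x : V =>
      -((f x + ENNReal.ofReal ((γ / 2) * ‖x - y‖ ^ 2) : ℝ≥0∞) : EReal)) x)

theorem erealToENNReal_coe (a : ℝ≥0∞) : erealToENNReal (a : EReal) = a :=
  EReal.toENNReal_coe

theorem lp_ofReal_mul_norm_sq {ι : Type*} {G : ι → Type*} [∀ i, NormedAddCommGroup (G i)]
    {c : ℝ} (hc : 0 ≤ c) (z : lp G 2) :
    ENNReal.ofReal (c * ‖z‖ ^ 2) = ∑' i, ENNReal.ofReal (c * ‖z i‖ ^ 2) := by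
  have h : HasSum (fun i => ‖z i‖ ^ 2) (‖z‖ ^ 2) := by
    simpa using lp.hasSum_norm (p := 2) (by simp) z
  have h' := h.mul_left c
  rw [← h'.tsum_eq, ENNReal.ofReal_tsum_of_nonneg (fun i => by positivity) h'.summable]

theorem memℓp_two_of_tsum_ofReal_ne_top {ι : Type*} {G : ι → Type*}
    [∀ i, NormedAddCommGroup (G i)] {c : ℝ} (hc : 0 < c) {z : ∀ i, G i}
    (h : ∑' i, ENNReal.ofReal (c * ‖z i‖ ^ 2) ≠ ∞) : Memℓp z 2 := by
  have hs := ENNReal.summable_toReal h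
  have hz (i : ι) : (ENNReal.ofReal (c * ‖z i‖ ^ 2)).toReal = c * ‖z i‖ ^ 2 :=
    ENNReal.toReal_ofReal (by positivity)
  simp only [hz] at hs
  exact memℓp_gen (by simpa using (summable_mul_left_iff hc.ne').1 hs)

/-- The Moreau envelope of a separable sum on a Hilbert direct sum splits. -/
theorem moreauEnvelope_lp_tsum {ι : Type*} [Countable ι] {G : ι → Type*}
    [∀ i, NormedAddCommGroup (G i)] (f : ∀ i, G i → ℝ≥0∞) {γ : ℝ} (hγ : 0 < γ) (y : lp G 2) :
    moreauEnvelope γ (fun x : lp G 2 => ∑' i, f i (x i)) y =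
      ∑' i, moreauEnvelope γ (f i) (y i) := by
  have hsplit (x : lp G 2) :
      (∑' i, f i (x i)) + ENNReal.ofReal ((γ / 2) * ‖x - y‖ ^ 2) =
        ∑' i, (f i (x i) + ENNReal.ofReal ((γ / 2) * ‖x i - y i‖ ^ 2)) := by
    rw [lp_ofReal_mul_norm_sq (by positivity), ENNReal.tsum_add]
    rfl
  apply le_antisymm
  · refine ENNReal.le_of_forall_pos_le_add fun ε hε hfin => ?_
    obtain ⟨δ, hδ, hδε⟩ := ENNReal.exists_pos_sum_of_countable'
      (ENNReal.coe_ne_zero.2 hε.ne') ι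
    have hx (i : ι) : ∃ x : G i, f i x + ENNReal.ofReal ((γ / 2) * ‖x - y i‖ ^ 2) <
        moreauEnvelope γ (f i) (y i) + δ i :=
      iInf_lt_iff.1 (ENNReal.lt_add_right (ENNReal.ne_top_of_tsum_ne_top hfin.ne i) (hδ i).ne')
    choose x hx using hx
    have hle : ∑' i, (f i (x i) + ENNReal.ofReal ((γ / 2) * ‖x i - y i‖ ^ 2)) ≤
        (∑' i, moreauEnvelope γ (f i) (y i)) + ε :=
      calc _ ≤ ∑' i, (moreauEnvelope γ (f i) (y i) + δ i) :=
            ENNReal.tsum_le_tsum fun i => (hx i).le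
        _ = (∑' i, moreauEnvelope γ (f i) (y i)) + ∑' i, δ i := ENNReal.tsum_add
        _ ≤ _ := by gcongr
    have hmem : Memℓp (fun i => x i - y i) 2 := by
      refine memℓp_two_of_tsum_ofReal_ne_top (half_pos hγ) (ne_top_of_le_ne_top ?_
        ((ENNReal.tsum_le_tsum fun i => le_add_self).trans hle))
      exact ENNReal.add_ne_top.2 ⟨hfin.ne, ENNReal.coe_ne_top⟩
    have hmem' : Memℓp x 2 := by
      have h := hmem.add (lp.memℓp y)
      rwa [show (fun i => x i - y i) + ⇑y = x from funext fun i => sub_add_cancel _ _] at h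
    exact (iInf_le _ (⟨x, hmem'⟩ : lp G 2)).trans ((hsplit ⟨x, hmem'⟩).trans_le hle)
  · refine le_iInf fun x => ?_
    rw [hsplit]
    exact ENNReal.tsum_le_tsum fun i => iInf_le _ (x i)

/-- For a Hilbert space direct sum `V = ⊕_j V_j` and
`F(x) = Σ_j f_j(x_j)`, one has `S_{V,γ}(F)(y) = Σ_j S_{V_j,γ}(f_j)(y_j)` (the right-hand side
being a sum of nonpositive extended reals, written as minus the `[0,∞]`-valued sum of the
negatives of its terms). -/
theorem statement3 {ι : Type*} [Countable ι]
    (G : ι → Type*) [∀ i, NormedAddCommGroup (G i)] [∀ i, InnerProductSpace ℝ (G i)]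
    [∀ i, CompleteSpace (G i)] [∀ i, TopologicalSpace.SeparableSpace (G i)]
    (f : ∀ i, G i → ℝ≥0∞) (γ : ℝ) (hγ : 0 < γ) (y : lp G 2) :
    Sgamma γ (fun x : lp G 2 => ∑' i, f i (x i)) y =
      -(((∑' i, erealToENNReal (-(Sgamma γ (f i) (y i)))) : ℝ≥0∞) : EReal) := by
  simp only [Sgamma_eq_neg_moreauEnvelope hγ.le, neg_neg, erealToENNReal_coe,
    moreauEnvelope_lp_tsum f hγ y]
end
end

section
/- Let V be a separable Hilbert space and let 𝐇(V) ⊂ B₂(V,V) denote the real Hilbert space of self-adjoint Hilbert–Schmidt operators on V with the Hilbert–Schmidt inner product. Suppose f : ℝ^{dim V} → [0,∞] is invariant under permutations of the coordinates (when dim V = ∞, identifying ℝ^{dim V} with ℓ²(ℕ) and allowing arbitrary bijections of ℕ), and define F : 𝐇(V) → [0,∞] by F(X) = f(λ(X)), where λ(X) is the sequence of eigenvalues of X counted with multiplicity. Then for every Y ∈ 𝐇(V) and every γ > 0, S_{𝐇(V),γ}(F)(Y) = S_{ℝ^{dim V},γ}(f)(λ(Y)). -/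
open scoped InnerProductSpace RealInnerProductSpace ENNReal Topology
open Filter

noncomputable section

/-- `X` is a Hilbert–Schmidt operator, expressed with respect to the Hilbert basis `e`
(the condition is independent of the choice of basis). -/
def IsHS {V₁ V₂ κ : Type*} [NormedAddCommGroup V₁] [InnerProductSpace ℝ V₁]
    [NormedAddCommGroup V₂] [InnerProductSpace ℝ V₂]
    (e : HilbertBasis κ ℝ V₁) (X : V₁ →L[ℝ] V₂) : Prop :=
  Summable fun k => ‖X (e k)‖ ^ 2

/-- The Hilbert–Schmidt inner product `⟨X,Y⟩_{B₂}`, computed with respect to the Hilbert basis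
`e` (the value is independent of the choice of basis for Hilbert–Schmidt operators). -/
def hsInner {V₁ V₂ κ : Type*} [NormedAddCommGroup V₁] [InnerProductSpace ℝ V₁]
    [NormedAddCommGroup V₂] [InnerProductSpace ℝ V₂]
    (e : HilbertBasis κ ℝ V₁) (X Y : V₁ →L[ℝ] V₂) : ℝ :=
  ∑' k, ⟪X (e k), Y (e k)⟫_ℝ

/-- The squared Hilbert–Schmidt distance `‖X - Y‖²_{B₂}`, computed with respect to the
Hilbert basis `e`. -/
def hsDistSq {V₁ V₂ κ : Type*} [NormedAddCommGroup V₁] [InnerProductSpace ℝ V₁]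
    [NormedAddCommGroup V₂] [InnerProductSpace ℝ V₂]
    (e : HilbertBasis κ ℝ V₁) (X Y : V₁ →L[ℝ] V₂) : ℝ :=
  ∑' k, ‖X (e k) - Y (e k)‖ ^ 2

/-- The S-transform on the Hilbert space `B₂(V₁,V₂)` of Hilbert–Schmidt operators:
`S_{B₂,γ}(F)(Y) = sup_{X ∈ B₂} ( -F(X) - (γ/2)‖X-Y‖²_{B₂} )`. -/
def SHS {V₁ V₂ κ : Type*} [NormedAddCommGroup V₁] [InnerProductSpace ℝ V₁]
    [NormedAddCommGroup V₂] [InnerProductSpace ℝ V₂]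
    (e : HilbertBasis κ ℝ V₁) (γ : ℝ) (F : (V₁ →L[ℝ] V₂) → EReal) (Y : V₁ →L[ℝ] V₂) : EReal :=
  ⨆ X : {X : V₁ →L[ℝ] V₂ // IsHS e X},
    (-(F X.1) - ((γ / 2 * hsDistSq e X.1 Y : ℝ) : EReal))

/-- The S-transform on the real Hilbert space `𝐇(V) ⊆ B₂(V,V)` of self-adjoint
Hilbert–Schmidt operators: `S_{𝐇(V),γ}(F)(Y) = sup_{X ∈ 𝐇(V)} ( -F(X) - (γ/2)‖X-Y‖²_{B₂} )`. -/
def SHSsa {V κ : Type*} [NormedAddCommGroup V] [InnerProductSpace ℝ V]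
    (e : HilbertBasis κ ℝ V) (γ : ℝ) (F : (V →L[ℝ] V) → EReal) (Y : V →L[ℝ] V) : EReal :=
  ⨆ X : {X : V →L[ℝ] V // IsHS e X ∧ ∀ x y : V, ⟪X x, y⟫_ℝ = ⟪x, X y⟫_ℝ},
    (-(F X.1) - ((γ / 2 * hsDistSq e X.1 Y : ℝ) : EReal))

section HilbertBasis

variable {V W ι κ : Type*} [NormedAddCommGroup V] [InnerProductSpace ℝ V]
  [NormedAddCommGroup W] [InnerProductSpace ℝ W]

theorem HilbertBasis.hasSum_inner_sq (b : HilbertBasis ι ℝ V) (x : V) :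
    HasSum (fun i => ⟪b i, x⟫_ℝ ^ 2) (‖x‖ ^ 2) := by
  have h := b.hasSum_inner_mul_inner x x
  rw [real_inner_self_eq_norm_sq] at h
  refine h.congr_fun fun i => ?_
  rw [real_inner_comm, sq]

theorem HilbertBasis.tsum_ofReal_inner_sq (b : HilbertBasis ι ℝ V) (x : V) :
    ∑' i, ENNReal.ofReal (⟪b i, x⟫_ℝ ^ 2) = ENNReal.ofReal (‖x‖ ^ 2) := by
  rw [← (b.hasSum_inner_sq x).tsum_eq,
    ENNReal.ofReal_tsum_of_nonneg (fun _ => sq_nonneg _) (b.hasSum_inner_sq x).summable]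

/-- The Hilbert–Schmidt norm of a symmetric operator does not depend on the Hilbert basis. -/
theorem tsum_ofReal_norm_sq_eq (e : HilbertBasis κ ℝ V) (v : HilbertBasis ι ℝ V)
    (Z : V →L[ℝ] V) (hZ : ∀ x y : V, ⟪Z x, y⟫_ℝ = ⟪x, Z y⟫_ℝ) :
    ∑' k, ENNReal.ofReal (‖Z (e k)‖ ^ 2) = ∑' i, ENNReal.ofReal (‖Z (v i)‖ ^ 2) := by
  simp_rw [← v.tsum_ofReal_inner_sq (Z (e _))]
  rw [ENNReal.tsum_comm]
  refine tsum_congr fun i => ?_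
  rw [← e.tsum_ofReal_inner_sq (Z (v i))]
  refine tsum_congr fun k => ?_
  rw [← hZ, real_inner_comm]

theorem IsHS.norm_sq_le [CompleteSpace V] [CompleteSpace W] (e : HilbertBasis κ ℝ V)
    {X : V →L[ℝ] W} (hX : IsHS e X) : ‖X‖ ^ 2 ≤ ∑' k, ‖X (e k)‖ ^ 2 := by
  have hnn : 0 ≤ ∑' k, ‖X (e k)‖ ^ 2 := tsum_nonneg fun _ => sq_nonneg _
  rw [← Real.le_sqrt (norm_nonneg _) hnn, ← ContinuousLinearMap.adjoint.norm_map X]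
  refine ContinuousLinearMap.opNorm_le_bound _ (Real.sqrt_nonneg _) fun y => ?_
  rw [← sq_le_sq₀ (norm_nonneg _) (by positivity), mul_pow, Real.sq_sqrt hnn,
    ← (e.hasSum_inner_sq _).tsum_eq, ← tsum_mul_right]
  refine (e.hasSum_inner_sq _).summable.tsum_le_tsum (fun k => ?_) (hX.mul_right _)
  rw [ContinuousLinearMap.adjoint_inner_right, ← mul_pow, sq_le_sq,
    abs_of_nonneg (a := ‖X (e k)‖ * ‖y‖) (by positivity)]
  exact abs_real_inner_le_norm _ _

theorem IsHS.isCompactOperator [CompleteSpace V] [CompleteSpace W] (e : HilbertBasis κ ℝ V)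
    {X : V →L[ℝ] W} (hX : IsHS e X) : IsCompactOperator X := by
  classical
  let T : Finset κ → V →L[ℝ] W := fun s => ∑ k ∈ s, (innerSL ℝ (e k)).smulRight (X (e k))
  have hT : ∀ s, IsCompactOperator (T s) := fun s => by
    refine (compactOperator (RingHom.id ℝ) V W).sum_mem fun k _ => ?_
    have h : IsCompactOperator (innerSL ℝ (e k)) :=
      isCompactOperator_of_locallyCompactSpace_dom (innerSL ℝ (e k))
    exact h.clm_comp (ContinuousLinearMap.toSpanSingleton ℝ (X (e k)))
  have hTe : ∀ s k, (X - T s) (e k) = if k ∈ s then 0 else X (e k) := fun s k => by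
    have : ∀ j, ⟪e j, e k⟫_ℝ = if j = k then 1 else 0 := fun j =>
      orthonormal_iff_ite.mp e.orthonormal j k
    simp only [T, sub_apply, sum_apply,
      ContinuousLinearMap.smulRight_apply, innerSL_apply_apply, this, ite_smul, one_smul, zero_smul,
      Finset.sum_ite_eq']
    split_ifs <;> simp
  have hsum : ∀ s : Finset κ, HasSum (fun k => ‖(X - T s) (e k)‖ ^ 2)
      (∑' k : {k // k ∉ s}, ‖X (e k)‖ ^ 2) := fun s => by
    have h : HasSum (fun k : {k // k ∉ s} => ‖X (e k)‖ ^ 2) _ := (hX.subtype _).hasSum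
    have h2 := (hasSum_subtype_iff_indicator (s := {k | k ∉ s}) (f := fun k => ‖X (e k)‖ ^ 2)).mp h
    refine h2.congr_fun fun k => ?_
    rw [hTe]
    by_cases hk : k ∈ s <;> simp [hk]
  refine isCompactOperator_of_tendsto (l := atTop) (F := T) ?_ (Eventually.of_forall hT)
  rw [tendsto_iff_norm_sub_tendsto_zero]
  have h0 := (tendsto_tsum_compl_atTop_zero fun k => ‖X (e k)‖ ^ 2).sqrt
  rw [Real.sqrt_zero] at h0
  refine squeeze_zero (fun _ => norm_nonneg _) (fun s => ?_) h0
  rw [norm_sub_rev]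
  refine Real.le_sqrt_of_sq_le ?_
  rw [← (hsum s).tsum_eq]
  exact IsHS.norm_sq_le e (hsum s).summable

theorem HilbertBasis.finite_of_finite (b : HilbertBasis ι ℝ V) (c : HilbertBasis κ ℝ V)
    [Finite ι] : Finite κ := by
  have := Fintype.ofFinite ι
  have : FiniteDimensional ℝ V := b.toOrthonormalBasis.toBasis.finiteDimensional_of_finite
  exact c.orthonormal.linearIndependent.finite

theorem HilbertBasis.countable_of_countable (b : HilbertBasis ι ℝ V) (c : HilbertBasis κ ℝ V)
    [Countable ι] : Countable κ := by
  have hcover : (⋃ i, Function.support fun k => ⟪c k, b i⟫_ℝ ^ 2) = Set.univ := by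
    refine Set.eq_univ_of_forall fun k => ?_
    by_contra hk
    simp only [Set.mem_iUnion, Function.mem_support, not_exists, not_not] at hk
    have h := b.hasSum_inner_sq (c k)
    simp_rw [real_inner_comm (c k), hk] at h
    have := h.unique hasSum_zero
    simp [c.orthonormal.1 k] at this
  rw [← Set.countable_univ_iff, ← hcover]
  exact Set.countable_iUnion fun i => (c.hasSum_inner_sq (b i)).summable.countable_support

theorem HilbertBasis.nonempty_equiv (b : HilbertBasis ι ℝ V) (c : HilbertBasis κ ℝ V)
    [Countable ι] : Nonempty (ι ≃ κ) := by
  have := b.countable_of_countable c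
  cases finite_or_infinite ι
  · have := b.finite_of_finite c
    have := Fintype.ofFinite ι
    have := Fintype.ofFinite κ
    exact ⟨b.toOrthonormalBasis.toBasis.indexEquiv c.toOrthonormalBasis.toBasis⟩
  · have : Infinite κ := not_finite_iff_infinite.mp fun _ =>
      not_finite_iff_infinite.mpr ‹Infinite ι› (c.finite_of_finite b)
    exact nonempty_equiv_of_countable

/-- The spectral expansion of an operator in a Hilbert basis of eigenvectors. -/
theorem hasSum_of_apply_eq_smul (v : HilbertBasis ι ℝ V) (l : ι → ℝ) (X : V →L[ℝ] V)
    (hX : ∀ i, X (v i) = l i • v i) (x : V) :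
    HasSum (fun i => (l i * ⟪x, v i⟫_ℝ) • v i) (X x) := by
  refine ((v.hasSum_repr x).mapL X).congr_fun fun i => ?_
  rw [map_smul, hX, smul_smul, v.repr_apply_apply, real_inner_comm, mul_comm]

theorem apply_eq_smul_of_eq_tsum (v : HilbertBasis ι ℝ V) (l : ι → ℝ) (X : V →L[ℝ] V)
    (hX : ∀ x, X x = ∑' i, (l i * ⟪x, v i⟫_ℝ) • v i) (i : ι) : X (v i) = l i • v i := by
  rw [hX, tsum_eq_single i]
  · simp [v.orthonormal.1 i]
  · intro j hj
    rw [v.orthonormal.2 hj.symm, mul_zero, zero_smul]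

/-- Spectral theorem for symmetric compact operators, with the eigenvectors indexed as a given
countable Hilbert basis. -/
theorem exists_hilbertBasis_apply_eq_smul [CompleteSpace V] [Countable ι]
    (b : HilbertBasis ι ℝ V) (X : V →L[ℝ] V) (hc : IsCompactOperator X)
    (hX : ∀ x y : V, ⟪X x, y⟫_ℝ = ⟪x, X y⟫_ℝ) :
    ∃ (v : HilbertBasis ι ℝ V) (l : ι → ℝ), ∀ i, X (v i) = l i • v i := by
  have hsymm : (X : V →ₗ[ℝ] V).IsSymmetric := hX
  let E : ℝ → Submodule ℝ V := fun μ => Module.End.eigenspace (X : Module.End ℝ V) μ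
  have hclosed : ∀ μ, IsClosed (E μ : Set V) := fun μ => by
    have : (E μ : Set V) = {x | X x = μ • x} := by
      ext x
      exact Module.End.mem_eigenspace_iff
    rw [this]
    exact isClosed_eq X.continuous (continuous_const_smul μ)
  have : ∀ μ, CompleteSpace (E μ) := fun μ => (hclosed μ).completeSpace_coe
  choose w c _ using fun μ => exists_hilbertBasis ℝ (E μ)
  let u : (Σ μ, w μ) → V := fun a => (E a.1).subtypeₗᵢ (c a.1 a.2)
  have hu : Orthonormal ℝ u :=
    hsymm.orthogonalFamily_eigenspaces.orthonormal_sigma_orthonormal fun μ => (c μ).orthonormal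
  have hXu : ∀ a, X (u a) = a.1 • u a := fun a =>
    Module.End.mem_eigenspace_iff.mp (c a.1 a.2).2
  have hspan : (Submodule.span ℝ (Set.range u))ᗮ = ⊥ := by
    rw [eq_bot_iff, ← ContinuousLinearMap.orthogonalComplement_iSup_eigenspaces_eq_bot hc hsymm]
    intro x hx
    rw [Submodule.mem_orthogonal] at hx
    rw [← Submodule.iInf_orthogonal, Submodule.mem_iInf]
    intro μ
    rw [Submodule.mem_orthogonal]
    intro y hy
    have hs := ((c μ).hasSum_repr ⟨y, hy⟩).mapL ((innerSL ℝ x).comp (E μ).subtypeL)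
    have hz : ∀ i, ((innerSL ℝ x).comp (E μ).subtypeL) ((c μ).repr ⟨y, hy⟩ i • c μ i) = 0 := by
      intro i
      have := hx (u ⟨μ, i⟩) (Submodule.subset_span ⟨_, rfl⟩)
      rw [real_inner_comm] at this
      rw [map_smul]
      change _ • ⟪x, u ⟨μ, i⟩⟫_ℝ = 0
      rw [this, smul_zero]
    simp_rw [hz] at hs
    have := hs.unique hasSum_zero
    rw [real_inner_comm]
    exact this
  let B := HilbertBasis.mkOfOrthogonalEqBot hu hspan
  have hB : ∀ a, B a = u a := fun a => by
    rw [HilbertBasis.coe_mkOfOrthogonalEqBot]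
  obtain ⟨φ⟩ := b.nonempty_equiv B
  have hv : Orthonormal ℝ (u ∘ φ) := hu.comp φ φ.injective
  have hvspan : (Submodule.span ℝ (Set.range (u ∘ φ)))ᗮ = ⊥ := by
    rwa [EquivLike.range_comp]
  refine ⟨HilbertBasis.mkOfOrthogonalEqBot hv hvspan, fun i => (φ i).1, fun i => ?_⟩
  rw [HilbertBasis.coe_mkOfOrthogonalEqBot]
  exact hXu (φ i)

end HilbertBasis

section Rearrangement

/-- A bilinear pairing against a doubly stochastic matrix is maximised at a permutation. -/
theorem exists_perm_sum_mul_doublyStochastic_le {n : Type*} [Fintype n] [DecidableEq n]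
    {M : Matrix n n ℝ} (hM : M ∈ doublyStochastic ℝ n) (x y : n → ℝ) :
    ∃ σ : Equiv.Perm n, ∑ i, ∑ j, x i * y j * M i j ≤ ∑ i, x i * y (σ i) := by
  obtain ⟨w, hw0, hw1, rfl⟩ := exists_eq_sum_perm_of_mem_doublyStochastic hM
  obtain ⟨σ, -, hσ⟩ := Finset.exists_max_image Finset.univ
    (fun σ : Equiv.Perm n => ∑ i, x i * y (σ i)) Finset.univ_nonempty
  refine ⟨σ, ?_⟩
  calc ∑ i, ∑ j, x i * y j * (∑ τ, w τ • τ.permMatrix ℝ : Matrix n n ℝ) i j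
      = ∑ τ, w τ * ∑ i, x i * y (τ i) := by
        simp_rw [Matrix.sum_apply, Matrix.smul_apply, Finset.mul_sum]
        rw [Finset.sum_comm (s := Finset.univ (α := Equiv.Perm n))]
        refine Finset.sum_congr rfl fun i _ => ?_
        rw [Finset.sum_comm]
        refine Finset.sum_congr rfl fun τ _ => ?_
        simp [mul_comm (w τ)]
    _ ≤ ∑ τ, w τ * ∑ i, x i * y (σ i) :=
        Finset.sum_le_sum fun τ _ => mul_le_mul_of_nonneg_left (hσ τ (Finset.mem_univ _)) (hw0 τ)
    _ = ∑ i, x i * y (σ i) := by rw [← Finset.sum_mul, hw1, one_mul]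

variable {ι : Type*}

/-- A bilinear pairing of finitely supported sequences against a doubly stochastic array is
dominated by the pairing of one sequence with a rearrangement of the other. -/
theorem exists_perm_sum_mul_le (a : ι → ι → ℝ) (ha : ∀ i j, 0 ≤ a i j)
    (hrow : ∀ i, HasSum (a i) 1) (hcol : ∀ j, HasSum (fun i => a i j) 1)
    (S : Finset ι) (x y : ι → ℝ) (hx : ∀ i ∉ S, x i = 0) (hy : ∀ i ∉ S, y i = 0) :
    ∃ π : Equiv.Perm ι, ∑ i ∈ S, ∑ j ∈ S, x i * y j * a i j ≤ ∑ i ∈ S, x i * y (π i) := by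
  classical
  cases finite_or_infinite ι
  · have := Fintype.ofFinite ι
    have hM : Matrix.of a ∈ doublyStochastic ℝ ι := by
      rw [mem_doublyStochastic_iff_sum]
      exact ⟨ha, fun i => (hasSum_fintype _).unique (hrow i),
        fun j => (hasSum_fintype _).unique (hcol j)⟩
    obtain ⟨σ, hσ⟩ := exists_perm_sum_mul_doublyStochastic_le hM x y
    refine ⟨σ, ?_⟩
    have hS : ∀ g : ι → ℝ, (∀ i ∉ S, g i = 0) → ∑ i ∈ S, g i = ∑ i, g i := fun g hg =>
      Finset.sum_subset (Finset.subset_univ S) fun i _ hi => hg i hi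
    rw [hS _ fun i hi => by simp [hx i hi], hS _ fun i hi => by simp [hx i hi]]
    refine le_trans (Finset.sum_le_sum fun i _ => ?_) hσ
    exact (hS _ fun j hj => by simp [hy j hj]).le
  · let A : Matrix S S ℝ := fun i j => a i j
    let M : Matrix (S ⊕ S) (S ⊕ S) ℝ := Matrix.fromBlocks A
      (Matrix.diagonal fun i => 1 - ∑ j, A i j) (Matrix.diagonal fun j => 1 - ∑ i, A i j)
      A.transpose
    have hr : ∀ i : S, ∑ j, A i j ≤ 1 := fun i => by
      rw [Finset.sum_coe_sort S fun j => a i j]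
      exact sum_le_hasSum S (fun j _ => ha i j) (hrow i)
    have hc : ∀ j : S, ∑ i, A i j ≤ 1 := fun j => by
      rw [Finset.sum_coe_sort S fun i => a i j]
      exact sum_le_hasSum S (fun i _ => ha i j) (hcol j)
    have hM : M ∈ doublyStochastic ℝ (S ⊕ S) := by
      rw [mem_doublyStochastic_iff_sum]
      refine ⟨?_, ?_, ?_⟩
      · rintro (i | i) (j | j)
        · exact ha i j
        · simp only [M, Matrix.fromBlocks_apply₁₂, Matrix.diagonal_apply]
          split_ifs
          exacts [sub_nonneg.mpr (hr i), le_rfl]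
        · simp only [M, Matrix.fromBlocks_apply₂₁, Matrix.diagonal_apply]
          split_ifs
          exacts [sub_nonneg.mpr (hc i), le_rfl]
        · exact ha j i
      · rintro (i | i) <;> simp [M, Matrix.diagonal_apply]
      · rintro (i | i) <;> simp [M, Matrix.diagonal_apply]
    obtain ⟨σ, hσ⟩ := exists_perm_sum_mul_doublyStochastic_le hM
      (Sum.elim (fun i => x i) 0) (Sum.elim (fun i => y i) 0)
    have hinf : Infinite {i // i ∉ S} := S.finite_toSet.infinite_compl.to_subtype
    obtain ⟨T, hT⟩ := Infinite.exists_subset_card_eq {i // i ∉ S} S.card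
    have hcard : Fintype.card S = Fintype.card T := by simp [hT]
    let ψ : S ≃ T := Fintype.equivOfCardEq hcard
    let φ : S ⊕ S ↪ ι := ⟨Sum.elim (fun i => i) fun i => ((ψ i : {i // i ∉ S}) : ι), by
      refine Function.Injective.sumElim Subtype.val_injective
        (Subtype.val_injective.comp (Subtype.val_injective.comp ψ.injective)) ?_
      intro i j h
      exact (ψ j).1.2 (h ▸ i.2)⟩
    have hyφ : ∀ p : S ⊕ S, y (φ p) = Sum.elim (fun i : S => y i) 0 p := by
      rintro (i | i)
      · rfl
      · exact hy _ (ψ i).1.2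
    refine ⟨σ.viaEmbedding φ, ?_⟩
    have hπ : ∀ i : S, y (σ.viaEmbedding φ i) = Sum.elim (fun i : S => y i) 0 (σ (Sum.inl i)) := by
      intro i
      rw [← hyφ, ← Equiv.Perm.viaEmbedding_apply]
      rfl
    rw [← Finset.sum_coe_sort S fun i => x i * y (σ.viaEmbedding φ i),
      ← Finset.sum_coe_sort S]
    simp_rw [hπ, ← Finset.sum_coe_sort S fun j => x _ * y j * a _ j]
    simpa [M, Matrix.fromBlocks_apply₁₁] using hσ

/-- The rearrangement of a square-summable sequence by a permutation. -/
def lpPerm (π : Equiv.Perm ι) : lp (fun _ : ι => ℝ) 2 →ₗᵢ[ℝ] lp (fun _ : ι => ℝ) 2 where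
  toFun l := ⟨fun i => l (π i), memℓp_gen <|
    ((memℓp_gen_iff (by norm_num)).mp (lp.memℓp l)).comp_injective π.injective⟩
  map_add' _ _ := rfl
  map_smul' _ _ := rfl
  norm_map' l := by
    rw [lp.norm_eq_tsum_rpow (by norm_num), lp.norm_eq_tsum_rpow (by norm_num)]
    congr 1
    exact π.tsum_eq fun i => ‖l i‖ ^ (2 : ℝ≥0∞).toReal

theorem lpPerm_apply (π : Equiv.Perm ι) (l : lp (fun _ : ι => ℝ) 2) (i : ι) :
    lpPerm π l i = l (π i) := rfl

/-- The pairing of two square-summable sequences against a doubly stochastic array is at most the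
supremum of their pairings up to rearrangement. -/
theorem exists_perm_lt_inner (a : ι → ι → ℝ) (ha : ∀ i j, 0 ≤ a i j)
    (hrow : ∀ i, HasSum (a i) 1) (hcol : ∀ j, HasSum (fun i => a i j) 1)
    (l m : lp (fun _ : ι => ℝ) 2) {P : ℝ}
    (hP : HasSum (fun p : ι × ι => l p.1 * m p.2 * a p.1 p.2) P) {c : ℝ} (hc : c < P) :
    ∃ π : Equiv.Perm ι, c < ⟪l, lpPerm π m⟫_ℝ := by
  classical
  let tr : lp (fun _ : ι => ℝ) 2 → Finset ι → lp (fun _ : ι => ℝ) 2 :=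
    fun x S => ∑ i ∈ S, lp.single 2 i (x i)
  have htr : ∀ x S i, tr x S i = if i ∈ S then x i else 0 := fun x S i => by
    simp only [tr, lp.coeFn_sum, lp.coeFn_single, Finset.sum_apply, Finset.sum_pi_single]
  have hlim : ∀ x, Tendsto (fun S => ‖x - tr x S‖) atTop (𝓝 0) := fun x => by
    have h : Tendsto (tr x) atTop (𝓝 x) := lp.hasSum_single (by norm_num) x
    simpa using (tendsto_const_nhds (x := x)).sub h |>.norm
  have hPlim : Tendsto (fun S : Finset ι => ∑ i ∈ S, ∑ j ∈ S, l i * m j * a i j) atTop (𝓝 P) := by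
    simp_rw [← Finset.sum_product']
    have h : Tendsto (fun s : Finset (ι × ι) => ∑ p ∈ s, l p.1 * m p.2 * a p.1 p.2) atTop (𝓝 P) :=
      hP
    exact h.comp (tendsto_finsetProd_atTop.comp tendsto_atTop_diagonal)
  have herr : Tendsto (fun S : Finset ι => ∑ i ∈ S, ∑ j ∈ S, l i * m j * a i j -
      (‖l - tr l S‖ * ‖m‖ + ‖l‖ * ‖m - tr m S‖ + ‖l - tr l S‖ * ‖m - tr m S‖)) atTop (𝓝 P) := by
    simpa using hPlim.sub ((((hlim l).mul_const ‖m‖).add ((hlim m).const_mul ‖l‖)).add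
      ((hlim l).mul (hlim m)))
  obtain ⟨S, hS⟩ := (herr.eventually_const_lt hc).exists
  obtain ⟨π, hπ⟩ := exists_perm_sum_mul_le a ha hrow hcol S (tr l S) (tr m S)
    (fun i hi => by simp [htr, hi]) (fun i hi => by simp [htr, hi])
  refine ⟨π, hS.trans_le ?_⟩
  have h1 : ∑ i ∈ S, ∑ j ∈ S, tr l S i * tr m S j * a i j =
      ∑ i ∈ S, ∑ j ∈ S, l i * m j * a i j := by
    refine Finset.sum_congr rfl fun i hi => Finset.sum_congr rfl fun j hj => ?_
    rw [htr, htr, if_pos hi, if_pos hj]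
  have h2 : ⟪tr l S, lpPerm π (tr m S)⟫_ℝ = ∑ i ∈ S, tr l S i * tr m S (π i) := by
    rw [lp.inner_eq_tsum, tsum_eq_sum (s := S)]
    · refine Finset.sum_congr rfl fun i _ => ?_
      rw [lpPerm_apply, Real.inner_apply]
    · intro i hi
      rw [htr, if_neg hi, inner_zero_left]
  have h3 : ⟪l, lpPerm π m⟫_ℝ = ⟪tr l S, lpPerm π (tr m S)⟫_ℝ + ⟪l - tr l S, lpPerm π m⟫_ℝ +
      ⟪l, lpPerm π (m - tr m S)⟫_ℝ - ⟪l - tr l S, lpPerm π (m - tr m S)⟫_ℝ := by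
    simp only [map_sub, inner_sub_left, inner_sub_right]
    ring
  have b : ∀ x y, |⟪x, lpPerm π y⟫_ℝ| ≤ ‖x‖ * ‖y‖ := fun x y => by
    simpa using abs_real_inner_le_norm x (lpPerm π y)
  have b1 := abs_le.mp (b (l - tr l S) m)
  have b2 := abs_le.mp (b l (m - tr m S))
  have b3 := abs_le.mp (b (l - tr l S) (m - tr m S))
  linarith

end Rearrangement

section DiagonalOperators

variable {V ι κ : Type*} [NormedAddCommGroup V] [InnerProductSpace ℝ V]

theorem lp.hasSum_sq (l : lp (fun _ : ι => ℝ) 2) : HasSum (fun i => l i ^ 2) (‖l‖ ^ 2) := by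
  rw [← real_inner_self_eq_norm_sq]
  refine (lp.hasSum_inner l l).congr_fun fun i => ?_
  rw [Real.inner_apply, sq]

theorem symmetric_of_apply_eq_smul (v : HilbertBasis ι ℝ V) (l : ι → ℝ) (X : V →L[ℝ] V)
    (hX : ∀ i, X (v i) = l i • v i) (x y : V) : ⟪X x, y⟫_ℝ = ⟪x, X y⟫_ℝ := by
  have h1 := (hasSum_of_apply_eq_smul v l X hX x).mapL (innerSL ℝ y)
  have h2 := (hasSum_of_apply_eq_smul v l X hX y).mapL (innerSL ℝ x)
  rw [real_inner_comm]
  refine h1.unique (h2.congr_fun fun i => ?_)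
  simp only [innerSL_apply_apply, inner_smul_right]
  ring

theorem tsum_ofReal_norm_sq_of_apply_eq_smul (e : HilbertBasis κ ℝ V) (v : HilbertBasis ι ℝ V)
    (l : ι → ℝ) (X : V →L[ℝ] V) (hX : ∀ i, X (v i) = l i • v i) :
    ∑' k, ENNReal.ofReal (‖X (e k)‖ ^ 2) = ∑' i, ENNReal.ofReal (l i ^ 2) := by
  rw [tsum_ofReal_norm_sq_eq e v X (symmetric_of_apply_eq_smul v l X hX)]
  simp [hX, norm_smul, v.orthonormal.1]

theorem summable_iff_tsum_ofReal_ne_top {α : Type*} (g : α → ℝ) (hg : ∀ a, 0 ≤ g a) :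
    Summable g ↔ ∑' a, ENNReal.ofReal (g a) ≠ ∞ := by
  refine ⟨fun h => h.tsum_ofReal_ne_top, fun h => ?_⟩
  simpa [ENNReal.toReal_ofReal (hg _)] using ENNReal.summable_toReal h

theorem tsum_eq_toReal_tsum_ofReal {α : Type*} (g : α → ℝ) (hg : ∀ a, 0 ≤ g a) :
    ∑' a, g a = (∑' a, ENNReal.ofReal (g a)).toReal := by
  rw [ENNReal.tsum_toReal_eq fun _ => ENNReal.ofReal_ne_top]
  simp [ENNReal.toReal_ofReal (hg _)]

theorem isHS_iff_of_apply_eq_smul (e : HilbertBasis κ ℝ V) (v : HilbertBasis ι ℝ V)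
    (l : ι → ℝ) (X : V →L[ℝ] V) (hX : ∀ i, X (v i) = l i • v i) :
    IsHS e X ↔ Summable fun i => l i ^ 2 := by
  rw [IsHS, summable_iff_tsum_ofReal_ne_top _ fun _ => sq_nonneg _,
    summable_iff_tsum_ofReal_ne_top _ fun _ => sq_nonneg _,
    tsum_ofReal_norm_sq_of_apply_eq_smul e v l X hX]

theorem hasSum_prod_mul_of_hasSum_one {c : ι → ℝ} {C : ℝ} (hc : ∀ i, 0 ≤ c i) (hC : HasSum c C)
    {a : ι → κ → ℝ} (ha : ∀ i j, 0 ≤ a i j) (hrow : ∀ i, HasSum (a i) 1) :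
    HasSum (fun p : ι × κ => c p.1 * a p.1 p.2) C := by
  have hrow' : ∀ i, HasSum (fun j => c i * a i j) (c i) := fun i => by
    simpa only [mul_one] using (hrow i).mul_left (c i)
  have hs : Summable fun p : ι × κ => c p.1 * a p.1 p.2 := by
    have h0 : 0 ≤ fun p : ι × κ => c p.1 * a p.1 p.2 := fun p => mul_nonneg (hc p.1) (ha p.1 p.2)
    refine (summable_prod_of_nonneg h0).mpr ⟨fun i => (hrow' i).summable, ?_⟩
    simpa only [(hrow' _).tsum_eq] using hC.summable
  exact (hs.hasSum.prod_fiberwise hrow').unique hC ▸ hs.hasSum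

theorem hsDistSq_of_common_basis (e : HilbertBasis κ ℝ V) (v : HilbertBasis ι ℝ V)
    (l m : lp (fun _ : ι => ℝ) 2) (X Y : V →L[ℝ] V)
    (hX : ∀ i, X (v i) = l i • v i) (hY : ∀ i, Y (v i) = m i • v i) :
    hsDistSq e X Y = ‖l - m‖ ^ 2 := by
  have h := tsum_ofReal_norm_sq_of_apply_eq_smul e v (l - m) (X - Y)
    fun i => by simp [hX, hY, sub_smul]
  rw [← (lp.hasSum_sq (l - m)).tsum_eq, hsDistSq, tsum_eq_toReal_tsum_ofReal _ fun _ => sq_nonneg _,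
    tsum_eq_toReal_tsum_ofReal _ fun _ => sq_nonneg _]
  exact congrArg ENNReal.toReal h

theorem hasSum_inner_sq_left (v : HilbertBasis ι ℝ V) (w : HilbertBasis κ ℝ V) (j : κ) :
    HasSum (fun i => ⟪v i, w j⟫_ℝ ^ 2) 1 := by
  simpa [w.orthonormal.1 j] using v.hasSum_inner_sq (w j)

theorem hasSum_inner_sq_right (v : HilbertBasis ι ℝ V) (w : HilbertBasis κ ℝ V) (i : ι) :
    HasSum (fun j => ⟪v i, w j⟫_ℝ ^ 2) 1 := by
  simpa only [real_inner_comm] using hasSum_inner_sq_left w v i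

theorem exists_hasSum_hsDistSq_eq (e : HilbertBasis κ ℝ V) (v w : HilbertBasis ι ℝ V)
    (l m : lp (fun _ : ι => ℝ) 2) (X Y : V →L[ℝ] V)
    (hX : ∀ i, X (v i) = l i • v i) (hY : ∀ i, Y (w i) = m i • w i) :
    ∃ P : ℝ, HasSum (fun p : ι × ι => l p.1 * m p.2 * ⟪v p.1, w p.2⟫_ℝ ^ 2) P ∧
      hsDistSq e X Y = ‖l‖ ^ 2 + ‖m‖ ^ 2 - 2 * P := by
  have hXs := symmetric_of_apply_eq_smul v l X hX
  have hYs := symmetric_of_apply_eq_smul w m Y hY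
  have hl : HasSum (fun p : ι × ι => l p.1 ^ 2 * ⟪v p.1, w p.2⟫_ℝ ^ 2) (‖l‖ ^ 2) :=
    hasSum_prod_mul_of_hasSum_one (fun _ => sq_nonneg _) (lp.hasSum_sq l)
      (a := fun i j => ⟪v i, w j⟫_ℝ ^ 2) (fun _ _ => sq_nonneg _) fun i => hasSum_inner_sq_right v w i
  have hm : HasSum (fun p : ι × ι => m p.2 ^ 2 * ⟪v p.1, w p.2⟫_ℝ ^ 2) (‖m‖ ^ 2) := by
    have h : HasSum (fun p : ι × ι => m p.1 ^ 2 * ⟪v p.2, w p.1⟫_ℝ ^ 2) (‖m‖ ^ 2) :=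
      hasSum_prod_mul_of_hasSum_one (fun _ => sq_nonneg _) (lp.hasSum_sq m)
        (a := fun j i => ⟪v i, w j⟫_ℝ ^ 2) (fun _ _ => sq_nonneg _)
        fun j => hasSum_inner_sq_left v w j
    exact (Equiv.prodComm ι ι).hasSum_iff.mpr h
  have hlm : Summable (fun p : ι × ι => l p.1 * m p.2 * ⟪v p.1, w p.2⟫_ℝ ^ 2) := by
    refine Summable.of_norm_bounded (hl.summable.add hm.summable) fun p => ?_
    rw [Real.norm_eq_abs, abs_le]
    constructor <;>
      nlinarith [mul_nonneg (sq_nonneg (l p.1 - m p.2)) (sq_nonneg ⟪v p.1, w p.2⟫_ℝ),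
        mul_nonneg (sq_nonneg (l p.1 + m p.2)) (sq_nonneg ⟪v p.1, w p.2⟫_ℝ),
        mul_nonneg (sq_nonneg (l p.1)) (sq_nonneg ⟪v p.1, w p.2⟫_ℝ),
        mul_nonneg (sq_nonneg (m p.2)) (sq_nonneg ⟪v p.1, w p.2⟫_ℝ)]
  refine ⟨_, hlm.hasSum, ?_⟩
  have hdist : HasSum (fun p : ι × ι => (l p.1 - m p.2) ^ 2 * ⟪v p.1, w p.2⟫_ℝ ^ 2)
      (‖l‖ ^ 2 + ‖m‖ ^ 2 - 2 * ∑' p : ι × ι, l p.1 * m p.2 * ⟪v p.1, w p.2⟫_ℝ ^ 2) :=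
    ((hl.add hm).sub (hlm.hasSum.mul_left 2)).congr_fun fun p => by ring
  rw [← hdist.tsum_eq, hsDistSq, tsum_eq_toReal_tsum_ofReal _ fun _ => sq_nonneg _,
    tsum_eq_toReal_tsum_ofReal _ fun _ => by positivity]
  congr 1
  have hZ : ∀ x y : V, ⟪(X - Y) x, y⟫_ℝ = ⟪x, (X - Y) y⟫_ℝ := fun x y => by
    simp [inner_sub_left, inner_sub_right, hXs, hYs]
  refine (tsum_ofReal_norm_sq_eq e w (X - Y) hZ).trans ?_
  rw [ENNReal.tsum_prod', ENNReal.tsum_comm]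
  refine tsum_congr fun j => ?_
  rw [← v.tsum_ofReal_inner_sq]
  refine tsum_congr fun i => ?_
  rw [sub_apply, inner_sub_right, ← hXs, hX, hY, real_inner_smul_left, real_inner_smul_right,
    ← mul_pow, sub_mul]

/-- Existence of the diagonal operator with a given square-summable sequence of eigenvalues. -/
theorem exists_apply_eq_smul (v : HilbertBasis ι ℝ V) (l : lp (fun _ : ι => ℝ) 2) :
    ∃ X : V →L[ℝ] V, ∀ i, X (v i) = l i • v i := by
  classical
  have hbound : ∀ (c : lp (fun _ : ι => ℝ) 2) i, (l i * c i) ^ 2 ≤ ‖l‖ ^ 2 * c i ^ 2 := by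
    intro c i
    rw [mul_pow]
    have := lp.norm_apply_le_norm (by norm_num) l i
    rw [Real.norm_eq_abs] at this
    exact mul_le_mul_of_nonneg_right (sq_le_sq.mpr (this.trans (le_abs_self _))) (sq_nonneg _)
  have hsum : ∀ c : lp (fun _ : ι => ℝ) 2, Summable fun i => (l i * c i) ^ 2 := fun c =>
    Summable.of_nonneg_of_le (fun _ => sq_nonneg _) (hbound c)
      ((lp.hasSum_sq c).summable.mul_left _)
  let D : lp (fun _ : ι => ℝ) 2 →ₗ[ℝ] lp (fun _ : ι => ℝ) 2 :=
    { toFun := fun c => ⟨fun i => l i * c i, memℓp_gen (by simpa [sq_abs, ← abs_mul] using hsum c)⟩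
      map_add' := fun c d => by
        ext i
        exact mul_add _ _ _
      map_smul' := fun r c => by
        ext i
        exact mul_left_comm _ _ _ }
  have hD : ∀ c, ‖D c‖ ≤ ‖l‖ * ‖c‖ := fun c => by
    rw [← sq_le_sq₀ (norm_nonneg _) (by positivity), mul_pow]
    exact hasSum_le (hbound c) (lp.hasSum_sq (D c)) ((lp.hasSum_sq c).mul_left _)
  refine ⟨v.repr.symm.toContinuousLinearEquiv.toContinuousLinearMap ∘L (D.mkContinuous _ hD) ∘L
    v.repr.toContinuousLinearEquiv.toContinuousLinearMap, fun i => ?_⟩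
  apply v.repr.injective
  ext j
  have h : l j = l i ∨ v.repr (v i) j = 0 := by
    rw [v.repr_apply_apply]
    rcases eq_or_ne j i with rfl | hji
    exacts [Or.inl rfl, Or.inr (v.orthonormal.2 hji)]
  simpa [D] using h

end DiagonalOperators

/-- Let `f : ℝ^d → [0,∞]` (`d = dim V`, realized as `ℓ²` over the index type
of a Hilbert basis of `V`) be permutation invariant and let `F(X) = f(λ(X))` on the space
`𝐇(V)` of self-adjoint Hilbert–Schmidt operators (expressed by the hypothesis that `F X = f l`
for every spectral decomposition `X = Σ l_i v_i ⊗ v_i` in a Hilbert basis `v` of `V`).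
Then `S_{𝐇(V),γ}(F)(Y) = S_{ℝ^d,γ}(f)(λ(Y))`. -/
theorem statement7 {V : Type*}
    [NormedAddCommGroup V] [InnerProductSpace ℝ V] [CompleteSpace V]
    {ι : Type*} [Countable ι]
    {κ : Type*} (e : HilbertBasis κ ℝ V)
    (f : (ι → ℝ) → ℝ≥0∞)
    (hperm : ∀ (x : ι → ℝ) (π : ι ≃ ι), f (fun i => x (π i)) = f x)
    (F : (V →L[ℝ] V) → ℝ≥0∞)
    (hF : ∀ (X : V →L[ℝ] V) (l : ι → ℝ) (v : HilbertBasis ι ℝ V),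
      (∀ x : V, X x = ∑' i, (l i * ⟪x, v i⟫_ℝ) • v i) → F X = f l)
    (γ : ℝ) (hγ : 0 < γ)
    (Y : V →L[ℝ] V) (hY : IsHS e Y) (hYsa : ∀ x y : V, ⟪Y x, y⟫_ℝ = ⟪x, Y y⟫_ℝ)
    (lY : lp (fun _ : ι => ℝ) 2) (vY : HilbertBasis ι ℝ V)
    (hYdec : ∀ x : V, Y x = ∑' i, (lY i * ⟪x, vY i⟫_ℝ) • vY i) :
    SHSsa e γ (fun X => (F X : EReal)) Y =
      SgammaE γ (fun x : lp (fun _ : ι => ℝ) 2 => (f x : EReal)) lY := by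
  have hYe := apply_eq_smul_of_eq_tsum vY lY Y hYdec
  refine le_antisymm (iSup_le ?_) (iSup_le fun x => ?_)
  · rintro ⟨X, hXHS, hXsa⟩
    obtain ⟨v, l, hXe⟩ := exists_hilbertBasis_apply_eq_smul vY X (hXHS.isCompactOperator e) hXsa
    have hl : Memℓp l 2 :=
      memℓp_gen (by simpa using (isHS_iff_of_apply_eq_smul e v l X hXe).mp hXHS)
    let L : lp (fun _ : ι => ℝ) 2 := ⟨l, hl⟩
    have hFX : F X = f l := hF X l v fun x => (hasSum_of_apply_eq_smul v l X hXe x).tsum_eq.symm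
    obtain ⟨P, hP, hdist⟩ := exists_hasSum_hsDistSq_eq e v vY L lY X Y hXe hYe
    change -(F X : EReal) - ((γ / 2 * hsDistSq e X Y : ℝ) : EReal) ≤ _
    rw [hFX]
    rcases eq_or_ne (f l) ∞ with htop | htop
    · simp [htop]
    lift f l to NNReal using htop with c hc
    by_contra! hlt
    obtain ⟨q, hq1, hq2⟩ := EReal.lt_iff_exists_real_btwn.mp hlt
    rw [EReal.coe_nnreal_eq_coe_real] at hq2
    have hq2' : q < -(c : ℝ) - γ / 2 * hsDistSq e X Y := by
      exact_mod_cast hq2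
    obtain ⟨π, hπ⟩ := exists_perm_lt_inner (fun i j => ⟪v i, vY j⟫_ℝ ^ 2)
      (fun _ _ => sq_nonneg _) (fun i => hasSum_inner_sq_right v vY i)
      (fun j => hasSum_inner_sq_left v vY j) L lY hP
      (c := P - (-(c : ℝ) - γ / 2 * hsDistSq e X Y - q) / γ)
      (sub_lt_self _ (div_pos (sub_pos.mpr hq2') hγ))
    have hnorm : ‖lpPerm π.symm L - lY‖ ^ 2 = ‖L‖ ^ 2 + ‖lY‖ ^ 2 - 2 * ⟪L, lpPerm π lY⟫_ℝ := by
      have h1 : lpPerm π (lpPerm π.symm L) = L := by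
        ext i
        simp [lpPerm_apply]
      rw [← (lpPerm π).norm_map, map_sub, h1, norm_sub_sq_real, (lpPerm π).norm_map]
      ring
    have hle : (q : EReal) ≤ -(f (lpPerm π.symm L) : EReal) -
        ((γ / 2 * ‖lpPerm π.symm L - lY‖ ^ 2 : ℝ) : EReal) := by
      have hf : f (lpPerm π.symm L) = c := (hperm l π.symm).trans hc.symm
      rw [hf, EReal.coe_nnreal_eq_coe_real]
      have : q ≤ -(c : ℝ) - γ / 2 * ‖lpPerm π.symm L - lY‖ ^ 2 := by
        rw [hnorm]
        rw [sub_lt_comm, lt_div_iff₀ hγ, hdist] at hπ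
        nlinarith
      exact_mod_cast this
    exact absurd hq1 (not_lt.mpr (hle.trans (le_iSup (fun x : lp (fun _ : ι => ℝ) 2 =>
      -(f x : EReal) - ((γ / 2 * ‖x - lY‖ ^ 2 : ℝ) : EReal)) (lpPerm π.symm L))))
  · obtain ⟨X, hX⟩ := exists_apply_eq_smul vY x
    have hHS : IsHS e X := (isHS_iff_of_apply_eq_smul e vY x X hX).mpr (lp.hasSum_sq x).summable
    refine le_iSup_of_le ⟨X, hHS, symmetric_of_apply_eq_smul vY x X hX⟩ ?_
    change _ ≤ -(F X : EReal) - ((γ / 2 * hsDistSq e X Y : ℝ) : EReal)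
    rw [hsDistSq_of_common_basis e vY x lY X Y hX hYe,
      hF X x vY fun y => (hasSum_of_apply_eq_smul vY x X hX y).tsum_eq.symm]
end
end

section
/- Fix μ > 0 and γ > 0, and let |x|₀ denote the function on ℝ which equals 0 at x = 0 and 1 for x ≠ 0. Then for all y, x ∈ ℝ: S_γ(μ|·|₀)(y) = −min{ γy²/2, μ } and S_γ²(μ|·|₀)(x) = μ − ( max{ √μ − √γ·|x|/√2, 0 } )². -/
open scoped InnerProductSpace RealInnerProductSpace ENNReal Topology
open Filter

noncomputable section

/-- If `-g - (γ/2)‖· - y‖²` attains its maximum `s`, then `s` is the S-transform of `g` at `y`. -/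
theorem SgammaE_coe_eq_of_isGreatest {V : Type*} [NormedAddCommGroup V] [InnerProductSpace ℝ V]
    {γ : ℝ} {g : V → ℝ} {y : V} {s : ℝ}
    (h : IsGreatest (Set.range fun x => -g x - γ / 2 * ‖x - y‖ ^ 2) s) :
    SgammaE γ (fun x => (g x : EReal)) y = (s : EReal) := by
  obtain ⟨⟨x₀, hx₀⟩, hub⟩ := h
  apply le_antisymm
  · refine iSup_le fun x => ?_
    exact EReal.coe_le_coe_iff.2 (hub ⟨x, rfl⟩)
  · refine le_iSup_of_le x₀ ?_
    exact EReal.coe_le_coe_iff.2 hx₀.ge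

theorem isGreatest_neg_indicator_sub_sq {μ γ : ℝ} (hμ : 0 < μ) (hγ : 0 < γ) (y : ℝ) :
    IsGreatest (Set.range fun x : ℝ => -(if x = 0 then 0 else μ) - γ / 2 * ‖x - y‖ ^ 2)
      (-(min (γ * y ^ 2 / 2) μ)) := by
  simp only [Real.norm_eq_abs, sq_abs]
  constructor
  · rcases le_total (γ * y ^ 2 / 2) μ with h | h
    · refine ⟨0, ?_⟩
      simp only [if_true, min_eq_left h]
      ring
    · have hy : y ≠ 0 := by
        rintro rfl
        norm_num at h
        linarith
      refine ⟨y, ?_⟩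
      simp [hy, min_eq_right h]
  · rintro _ ⟨x, rfl⟩
    dsimp only
    split_ifs with hx
    · subst hx
      linarith [min_le_left (γ * y ^ 2 / 2) μ]
    · have : 0 ≤ γ / 2 * (x - y) ^ 2 := by positivity
      linarith [min_le_right (γ * y ^ 2 / 2) μ]

theorem min_sq_sub_sq_le (a X Y : ℝ) :
    min (Y ^ 2) (a ^ 2) - (Y - X) ^ 2 ≤ a ^ 2 - (max (a - |X|) 0) ^ 2 := by
  rcases le_total a |X| with h | h
  · rw [max_eq_right (by linarith)]
    linarith [min_le_right (Y ^ 2) (a ^ 2), sq_nonneg (Y - X)]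
  · rw [max_eq_left (by linarith)]
    rcases le_total |Y| a with hY | hY
    · have hXY : X * Y ≤ |X| * a :=
        (le_abs_self _).trans (by rw [abs_mul]; gcongr)
      linarith [min_le_left (Y ^ 2) (a ^ 2), sq_abs X]
    · have hd : (a - |X|) ^ 2 ≤ (Y - X) ^ 2 := by
        rw [← sq_abs (Y - X)]
        have := abs_sub_abs_le_abs_sub Y X
        exact pow_le_pow_left₀ (by linarith) (by linarith) 2
      linarith [min_le_right (Y ^ 2) (a ^ 2)]

theorem exists_min_sq_sub_sq_eq {a : ℝ} (ha : 0 ≤ a) (X : ℝ) :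
    ∃ Y, min (Y ^ 2) (a ^ 2) - (Y - X) ^ 2 = a ^ 2 - (max (a - |X|) 0) ^ 2 := by
  rcases le_total a |X| with h | h
  · refine ⟨X, ?_⟩
    have : a ^ 2 ≤ X ^ 2 := sq_le_sq.2 (by rwa [abs_of_nonneg ha])
    rw [max_eq_right (by linarith), min_eq_right this]
    ring
  · rw [max_eq_left (by linarith)]
    rcases abs_cases X with ⟨hX, -⟩ | ⟨hX, -⟩
    · exact ⟨a, by rw [min_self, hX]⟩
    · refine ⟨-a, ?_⟩
      rw [neg_sq, min_self, hX]
      ring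

theorem isGreatest_min_sub_sq {μ γ : ℝ} (hμ : 0 < μ) (hγ : 0 < γ) (x : ℝ) :
    IsGreatest (Set.range fun y : ℝ => -(-(min (γ * y ^ 2 / 2) μ)) - γ / 2 * ‖y - x‖ ^ 2)
      (μ - (max (√μ - √γ * |x| / √2) 0) ^ 2) := by
  obtain ⟨c, hc⟩ : ∃ c, c = √γ / √2 := ⟨_, rfl⟩
  have hc0 : 0 < c := by rw [hc]; positivity
  have hc2 : c ^ 2 = γ / 2 := by
    rw [hc, div_pow, Real.sq_sqrt hγ.le, Real.sq_sqrt zero_le_two]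
  have hx : √γ * |x| / √2 = |c * x| := by
    rw [abs_mul, abs_of_pos hc0, hc]
    ring
  have hfun (y : ℝ) : -(-(min (γ * y ^ 2 / 2) μ)) - γ / 2 * ‖y - x‖ ^ 2 =
      min ((c * y) ^ 2) (√μ ^ 2) - (c * y - c * x) ^ 2 := by
    rw [neg_neg, Real.norm_eq_abs, sq_abs, ← mul_sub, mul_pow, mul_pow, hc2, Real.sq_sqrt hμ.le,
      mul_div_right_comm]
  have hμ2 : μ - (max (√μ - √γ * |x| / √2) 0) ^ 2 =
      √μ ^ 2 - (max (√μ - |c * x|) 0) ^ 2 := by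
    rw [hx, Real.sq_sqrt hμ.le]
  simp only [hfun, hμ2]
  constructor
  · obtain ⟨Y, hY⟩ := exists_min_sq_sub_sq_eq (Real.sqrt_nonneg μ) (c * x)
    exact ⟨Y / c, by simpa only [mul_div_cancel₀ Y hc0.ne'] using hY⟩
  · rintro _ ⟨y, rfl⟩
    exact min_sq_sub_sq_le _ _ _

/-- For `μ, γ > 0` and `|·|₀` the function on `ℝ` equal to `0` at `0` and `1`
elsewhere: `S_γ(μ|·|₀)(y) = -min(γy²/2, μ)` and
`S_γ²(μ|·|₀)(x) = μ - (max(√μ - √γ·|x|/√2, 0))²`. -/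
theorem statement8 (μ γ : ℝ) (hμ : 0 < μ) (hγ : 0 < γ) :
    (∀ y : ℝ, Sgamma γ (fun x : ℝ => if x = 0 then 0 else ENNReal.ofReal μ) y =
      ((-(min (γ * y ^ 2 / 2) μ) : ℝ) : EReal)) ∧
    (∀ x : ℝ, Sgamma2 γ (fun x : ℝ => if x = 0 then 0 else ENNReal.ofReal μ) x =
      ((μ - (max (Real.sqrt μ - Real.sqrt γ * |x| / Real.sqrt 2) 0) ^ 2 : ℝ) : EReal)) := by
  have hS : Sgamma γ (fun x : ℝ => if x = 0 then 0 else ENNReal.ofReal μ) =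
      fun y => ((-(min (γ * y ^ 2 / 2) μ) : ℝ) : EReal) := by
    funext y
    rw [← SgammaE_coe_eq_of_isGreatest (isGreatest_neg_indicator_sub_sq hμ hγ y), Sgamma]
    congr 1
    funext x
    split_ifs <;> simp [hμ.le]
  refine ⟨congrFun hS, fun x => ?_⟩
  rw [Sgamma2, hS]
  exact SgammaE_coe_eq_of_isGreatest (isGreatest_min_sub_sq hμ hγ x)
end
end

section
/- Let f be a weakly lower semicontinuous [0,∞]-valued function on a separable real Hilbert space V, let γ > 0, and let x₀ ∈ V be a point with f(x₀) > S_γ²(f)(x₀). Then there exist a unit vector ν ∈ V, a real number a, and t₀ > 0 such that S_γ²(f)(x₀ + tν) = S_γ²(f)(x₀) + a·t − (γ/2)t² for all t ∈ (−t₀,t₀); in particular, t ↦ S_γ²(f)(x₀ + tν) has second derivative equal to −γ on (−t₀,t₀). -/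
open scoped InnerProductSpace RealInnerProductSpace ENNReal Topology
open Filter

noncomputable section

section ConvexHullUnion

variable {V : Type*} [NormedAddCommGroup V] [InnerProductSpace ℝ V]

/-- A bounded family in `V × ℝ` converges weakly along any ultrafilter. -/
lemma exists_weak_limit_prod [CompleteSpace V] {ι : Type*} (U : Ultrafilter ι) (e : ι → V × ℝ)
    (M : ℝ) (he : ∀ᶠ i in (U : Filter ι), ‖e i‖ ≤ M) :
    ∃ x : V × ℝ, ∀ φ : StrongDual ℝ (V × ℝ),
      Tendsto (fun i => φ (e i)) U (𝓝 (φ x)) := by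
  obtain ⟨ψ, -, hψ⟩ := (WeakDual.isCompact_closedBall (𝕜 := ℝ) (E := V) 0 M).ultrafilter_le_nhds
    (U.map fun i => StrongDual.toWeakDual (InnerProductSpace.toDual ℝ V (e i).1)) (by
      rw [Ultrafilter.coe_map, le_principal_iff, mem_map]
      filter_upwards [he] with i hi
      simpa using (norm_fst_le (e i)).trans hi)
  obtain ⟨r, -, hr⟩ := (isCompact_closedBall (0 : ℝ) M).ultrafilter_le_nhds
    (U.map fun i => (e i).2) (by
      rw [Ultrafilter.coe_map, le_principal_iff, mem_map]
      filter_upwards [he] with i hi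
      simpa using (norm_snd_le (e i)).trans hi)
  refine ⟨((InnerProductSpace.toDual ℝ V).symm (WeakDual.toStrongDual ψ), r), fun φ => ?_⟩
  have hsplit : ∀ y : V × ℝ, φ y = φ (y.1, 0) + φ (0, y.2) := fun y => by
    rw [← map_add]; simp
  set w : V := (InnerProductSpace.toDual ℝ V).symm (φ.comp (.inl ℝ V ℝ)) with hw
  have hφw : ∀ v : V, φ (v, 0) = ⟪v, w⟫ := fun v => by
    rw [real_inner_comm, hw, InnerProductSpace.toDual_symm_apply]; simp
  have hfst : Tendsto (fun i => ⟪(e i).1, w⟫) U (𝓝 (ψ w)) := by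
    have := ((WeakDual.eval_continuous (𝕜 := ℝ) w).tendsto ψ).comp hψ
    simpa [Function.comp_def, tendsto_map'_iff] using this
  have hsnd : Tendsto (fun i => φ ((0 : V), (e i).2)) U (𝓝 (φ (0, r))) :=
    ((by fun_prop : Continuous fun s : ℝ => φ ((0 : V), s)).tendsto r).comp hr
  rw [hsplit]
  simp_rw [hsplit (e _), hφw]
  simpa using hfst.add hsnd

lemma Convex.mem_of_weak_tendsto {E ι : Type*} [NormedAddCommGroup E] [NormedSpace ℝ E]
    {C : Set E} (hC : Convex ℝ C) (hcl : IsClosed C) {l : Filter ι} [l.NeBot] {e : ι → E} {x : E}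
    (he : ∀ i, e i ∈ C)
    (hx : ∀ φ : StrongDual ℝ E, Tendsto (fun i => φ (e i)) l (𝓝 (φ x))) : x ∈ C := by
  by_contra hxC
  obtain ⟨φ, u, hu, hφ⟩ := geometric_hahn_banach_point_closed hC hcl hxC
  exact absurd (ge_of_tendsto' (hx φ) fun i => (hφ _ (he i)).le) (not_le.2 hu)

lemma eq_of_forall_dual_eq {E : Type*} [NormedAddCommGroup E] [NormedSpace ℝ E] {x y : E}
    (h : ∀ φ : StrongDual ℝ E, φ x = φ y) : x = y :=
  SeparatingDual.eq_iff_forall_dual_eq.2 h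

/-- Weak limits of rescaled points of a closed convex set lying above a paraboloid. If the scaling
factors tend to `0`, only the vertical part can survive. -/
lemma exists_weak_limit_smul [CompleteSpace V] {C : Set (V × ℝ)} (hC : Convex ℝ C)
    (hcl : IsClosed C) {c : ℝ} (hc : 0 < c) (hpar : ∀ e ∈ C, c * ‖e.1‖ ^ 2 ≤ e.2)
    {ι : Type*} (U : Ultrafilter ι) (k : ι → ℝ) (hk : ∀ i, k i ∈ Set.Icc (0 : ℝ) 1)
    (e : ι → V × ℝ) (he : ∀ i, e i ∈ C) (M : ℝ)
    (hM : ∀ᶠ i in (U : Filter ι), k i * (e i).2 ≤ M) :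
    ∃ l : ℝ, 0 ≤ l ∧ Tendsto k U (𝓝 l) ∧
      ((0 < l ∧ ∃ x ∈ C, ∀ φ : StrongDual ℝ (V × ℝ),
          Tendsto (fun i => φ (k i • e i)) U (𝓝 (φ (l • x)))) ∨
        (l = 0 ∧ ∃ ρ : ℝ, 0 ≤ ρ ∧ ∀ φ : StrongDual ℝ (V × ℝ),
          Tendsto (fun i => φ (k i • e i)) U (𝓝 (φ (0, ρ))))) := by
  obtain ⟨l, hl, hkl⟩ := (isCompact_Icc (a := (0 : ℝ)) (b := 1)).ultrafilter_le_nhds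
    (U.map k) (by
      rw [Ultrafilter.coe_map, le_principal_iff, mem_map]
      exact Eventually.of_forall hk)
  replace hkl : Tendsto k U (𝓝 l) := hkl
  have hnn : ∀ i, 0 ≤ (e i).2 := fun i => le_trans (by positivity) (hpar _ (he i))
  refine ⟨l, hl.1, hkl, ?_⟩
  rcases hl.1.eq_or_lt with rfl | hpos
  · right
    refine ⟨rfl, ?_⟩
    obtain ⟨ρ, hρ, hkρ⟩ := (isCompact_Icc (a := (0 : ℝ)) (b := M)).ultrafilter_le_nhds
      (U.map fun i => k i * (e i).2) (by
        rw [Ultrafilter.coe_map, le_principal_iff, mem_map]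
        filter_upwards [hM] with i hi
        exact ⟨mul_nonneg (hk i).1 (hnn i), hi⟩)
    replace hkρ : Tendsto (fun i => k i * (e i).2) U (𝓝 ρ) := hkρ
    refine ⟨ρ, hρ.1, fun φ => (φ.continuous.tendsto _).comp ?_⟩
    have hsq : Tendsto (fun i => ‖k i • (e i).1‖ ^ 2) U (𝓝 0) := by
      have hlim : Tendsto (fun i => k i * (M / c)) U (𝓝 0) := by
        simpa using hkl.mul_const (M / c)
      refine tendsto_of_tendsto_of_tendsto_of_le_of_le' tendsto_const_nhds hlim
        (Eventually.of_forall fun i => by positivity) ?_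
      filter_upwards [hM] with i hi
      rw [norm_smul, mul_pow, Real.norm_eq_abs, sq_abs, sq, mul_assoc]
      refine mul_le_mul_of_nonneg_left ?_ (hk i).1
      rw [le_div_iff₀ hc]
      nlinarith [mul_le_mul_of_nonneg_left (hpar _ (he i)) (hk i).1]
    have hfst : Tendsto (fun i => k i • (e i).1) U (𝓝 0) := by
      rw [tendsto_zero_iff_norm_tendsto_zero]
      simpa using hsq.sqrt
    simpa [Prod.smul_def] using hfst.prodMk_nhds hkρ
  · left
    refine ⟨hpos, ?_⟩
    have hbound : ∀ᶠ i in (U : Filter ι), ‖e i‖ ≤ 2 * M / l + (2 * M / l / c + 1) := by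
      filter_upwards [hM, hkl.eventually (lt_mem_nhds (half_lt_self hpos))] with i hi hki
      have h2 : (e i).2 ≤ 2 * M / l := by
        rw [le_div_iff₀ hpos]
        nlinarith [hnn i]
      have h1 : ‖(e i).1‖ ^ 2 ≤ 2 * M / l / c := by
        rw [le_div_iff₀ hc]
        linarith [hpar _ (he i)]
      have h0 : 0 ≤ 2 * M / l / c := le_trans (by positivity) h1
      have := hnn i
      refine norm_prod_le_iff.2 ⟨by nlinarith [sq_nonneg (‖(e i).1‖ - 1)], ?_⟩
      rw [Real.norm_of_nonneg this]
      linarith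
    obtain ⟨x, hx⟩ := exists_weak_limit_prod U e _ hbound
    refine ⟨x, hC.mem_of_weak_tendsto hcl he hx, fun φ => ?_⟩
    simpa using hkl.mul (hx φ)

lemma add_vertical_mem_closure_convexHull {E : Set (V × ℝ)}
    (hup : ∀ e ∈ E, ∀ ρ : ℝ, 0 ≤ ρ → e + (0, ρ) ∈ E) {ρ : ℝ} (hρ : 0 ≤ ρ) {e : V × ℝ}
    (he : e ∈ closure (convexHull ℝ E)) : e + (0, ρ) ∈ closure (convexHull ℝ E) := by
  have hcl : IsClosed ((fun e : V × ℝ => e + (0, ρ)) ⁻¹' closure (convexHull ℝ E)) :=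
    isClosed_closure.preimage (by fun_prop)
  have hconv : Convex ℝ ((fun e : V × ℝ => e + (0, ρ)) ⁻¹' closure (convexHull ℝ E)) :=
    (convex_convexHull ℝ E).closure.translate_preimage_right _ |> fun h => by
      simpa [add_comm] using h
  have hsub : E ⊆ (fun e : V × ℝ => e + (0, ρ)) ⁻¹' closure (convexHull ℝ E) := fun x hx =>
    subset_closure (subset_convexHull ℝ E (hup x hx ρ hρ))
  exact closure_minimal (convexHull_min hsub hconv) hcl he

/-- The closed convex hull of the union of two upward closed sets lying above a paraboloid. -/
lemma mem_closure_convexHull_union [CompleteSpace V] {E F : Set (V × ℝ)} {c : ℝ} (hc : 0 < c)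
    (hE : ∀ e ∈ E, c * ‖e.1‖ ^ 2 ≤ e.2) (hF : ∀ e ∈ F, c * ‖e.1‖ ^ 2 ≤ e.2)
    (hEup : ∀ e ∈ E, ∀ ρ : ℝ, 0 ≤ ρ → e + (0, ρ) ∈ E)
    (hFup : ∀ e ∈ F, ∀ ρ : ℝ, 0 ≤ ρ → e + (0, ρ) ∈ F) {p : V × ℝ}
    (hp : p ∈ closure (convexHull ℝ (E ∪ F))) :
    p ∈ closure (convexHull ℝ E) ∨ p ∈ closure (convexHull ℝ F) ∨
      ∃ x ∈ closure (convexHull ℝ E), ∃ y ∈ closure (convexHull ℝ F), ∃ a b : ℝ,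
        0 < a ∧ 0 < b ∧ a + b = 1 ∧ a • x + b • y = p := by
  rcases E.eq_empty_or_nonempty with rfl | hEne
  · right; left; simpa using hp
  rcases F.eq_empty_or_nonempty with rfl | hFne
  · left; simpa using hp
  have hpar : ∀ G : Set (V × ℝ), (∀ e ∈ G, c * ‖e.1‖ ^ 2 ≤ e.2) →
      ∀ e ∈ closure (convexHull ℝ G), c * ‖e.1‖ ^ 2 ≤ e.2 := by
    intro G hG e he
    have hconv : Convex ℝ {e : V × ℝ | e.1 ∈ Set.univ ∧ c * ‖e.1‖ ^ 2 ≤ e.2} := by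
      have h := ((convexOn_univ_norm (E := V)).pow (fun x _ => norm_nonneg x) 2).smul hc.le
      exact h.convex_epigraph
    have hcl : IsClosed {e : V × ℝ | e.1 ∈ Set.univ ∧ c * ‖e.1‖ ^ 2 ≤ e.2} := by
      simp only [Set.mem_univ, true_and]
      exact isClosed_le (by fun_prop) (by fun_prop)
    have hsub : G ⊆ {e : V × ℝ | e.1 ∈ Set.univ ∧ c * ‖e.1‖ ^ 2 ≤ e.2} := fun x hx =>
      ⟨trivial, hG x hx⟩
    exact (closure_minimal (convexHull_min hsub hconv) hcl he).2
  obtain ⟨q, hq, hqp⟩ := mem_closure_iff_seq_limit.1 hp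
  simp_rw [convexHull_union hEne hFne, mem_convexJoin] at hq
  choose x hx y hy a b ha hb hab hxy using hq
  have hU : ((hyperfilter ℕ : Ultrafilter ℕ) : Filter ℕ) ≤ atTop :=
    Nat.hyperfilter_le_atTop
  have hqU := hqp.mono_left hU
  have hx' := fun n => subset_closure (hx n)
  have hy' := fun n => subset_closure (hy n)
  have hsnd : ∀ᶠ n in ((hyperfilter ℕ : Ultrafilter ℕ) : Filter ℕ), (q n).2 ≤ p.2 + 1 :=
    (((continuous_snd.tendsto p).comp hqU).eventually (gt_mem_nhds (lt_add_one p.2))).mono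
      fun n hn => hn.le
  have hval : ∀ n, (q n).2 = a n * (x n).2 + b n * (y n).2 := fun n => by rw [← hxy n]; simp
  have hxnn : ∀ n, 0 ≤ a n * (x n).2 := fun n =>
    mul_nonneg (ha n) (le_trans (by positivity) (hpar E hE _ (hx' n)))
  have hynn : ∀ n, 0 ≤ b n * (y n).2 := fun n =>
    mul_nonneg (hb n) (le_trans (by positivity) (hpar F hF _ (hy' n)))
  obtain ⟨l, hl, hal, hX⟩ := exists_weak_limit_smul (convex_convexHull ℝ E).closure isClosed_closure
    hc (hpar E hE) (hyperfilter ℕ) a (fun n => ⟨ha n, by linarith [hab n, hb n]⟩) x hx' (p.2 + 1)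
    (hsnd.mono fun n hn => by linarith [hval n, hynn n])
  obtain ⟨l', hl', hbl, hY⟩ := exists_weak_limit_smul (convex_convexHull ℝ F).closure
    isClosed_closure
    hc (hpar F hF) (hyperfilter ℕ) b (fun n => ⟨hb n, by linarith [hab n, ha n]⟩) y hy' (p.2 + 1)
    (hsnd.mono fun n hn => by linarith [hval n, hxnn n])
  have hsum : l + l' = 1 := tendsto_nhds_unique (hal.add hbl) (by simp [hab])
  have hlim : ∀ u v : V × ℝ,
      (∀ φ : StrongDual ℝ (V × ℝ), Tendsto (fun n => φ (a n • x n)) (hyperfilter ℕ) (𝓝 (φ u))) →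
      (∀ φ : StrongDual ℝ (V × ℝ), Tendsto (fun n => φ (b n • y n)) (hyperfilter ℕ) (𝓝 (φ v))) →
      u + v = p := fun u v hu hv => eq_of_forall_dual_eq fun φ => by
    refine tendsto_nhds_unique (f := fun n => φ (q n)) ?_ ((φ.continuous.tendsto p).comp hqU)
    simp_rw [← hxy, map_add]
    exact (hu φ).add (hv φ)
  rcases hX with ⟨hl0, u, hu, hXu⟩ | ⟨rfl, ρ, hρ, hXρ⟩ <;>
    rcases hY with ⟨hl0', v, hv, hYv⟩ | ⟨rfl, σ, hσ, hYσ⟩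
  · exact .inr (.inr ⟨u, hu, v, hv, l, l', hl0, hl0', hsum, hlim _ _ hXu hYv⟩)
  · left
    obtain rfl : l = 1 := by linarith
    rw [← hlim _ _ hXu hYσ, one_smul]
    exact add_vertical_mem_closure_convexHull hEup hσ hu
  · right; left
    obtain rfl : l' = 1 := by linarith
    rw [← hlim _ _ hXρ hYv, one_smul, add_comm]
    exact add_vertical_mem_closure_convexHull hFup hρ hv
  · norm_num at hsum

/-- A form of Milman's theorem: a point which is extreme in a convex set containing `E` and which
avoids each of finitely many closed convex sets covering `E` is not in the closed convex hull. -/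
lemma notMem_closure_convexHull_of_cover [CompleteSpace V] {c : ℝ} (hc : 0 < c) {T : Set (V × ℝ)}
    (hT : Convex ℝ T) (hTcl : IsClosed T) {p : V × ℝ} (hp : p ∈ T.extremePoints ℝ)
    (A : Set (Set (V × ℝ))) (hfin : A.Finite) :
    ∀ E : Set (V × ℝ), E ⊆ T → (∀ e ∈ E, c * ‖e.1‖ ^ 2 ≤ e.2) →
      (∀ e ∈ E, ∀ ρ : ℝ, 0 ≤ ρ → e + (0, ρ) ∈ E) →
      (∀ B ∈ A, Convex ℝ B ∧ IsClosed B ∧ p ∉ B ∧ ∀ e ∈ B, ∀ ρ : ℝ, 0 ≤ ρ → e + (0, ρ) ∈ B) →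
      E ⊆ ⋃₀ A → p ∉ closure (convexHull ℝ E) := by
  induction A, hfin using Set.Finite.induction_on with
  | empty =>
    intro E _ _ _ _ hEA
    rw [Set.sUnion_empty, Set.subset_empty_iff] at hEA
    simp [hEA]
  | @insert B A _ _ ih =>
    intro E hET hpar hup hA hEA hpE
    obtain ⟨hBc, hBcl, hpB, hBup⟩ := hA B (Set.mem_insert _ _)
    have hA' := fun D hD => hA D (Set.mem_insert_of_mem B hD)
    have hsplit : E = E ∩ B ∪ E ∩ ⋃₀ A := by
      rw [← Set.inter_union_distrib_left, ← Set.sUnion_insert, Set.inter_eq_left.2 hEA]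
    have hupB : ∀ e ∈ E ∩ B, ∀ ρ : ℝ, 0 ≤ ρ → e + (0, ρ) ∈ E ∩ B := fun e he ρ hρ =>
      ⟨hup e he.1 ρ hρ, hBup e he.2 ρ hρ⟩
    have hupA : ∀ e ∈ E ∩ ⋃₀ A, ∀ ρ : ℝ, 0 ≤ ρ → e + (0, ρ) ∈ E ∩ ⋃₀ A := by
      rintro e ⟨heE, D, hD, heD⟩ ρ hρ
      exact ⟨hup e heE ρ hρ, D, hD, (hA' D hD).2.2.2 e heD ρ hρ⟩
    have h1 : p ∉ closure (convexHull ℝ (E ∩ B)) := fun h =>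
      hpB (closure_minimal (convexHull_min Set.inter_subset_right hBc) hBcl h)
    have h2 : p ∉ closure (convexHull ℝ (E ∩ ⋃₀ A)) :=
      ih _ (Set.inter_subset_left.trans hET) (fun e he => hpar e he.1) hupA hA'
        Set.inter_subset_right
    have hsub : ∀ F ⊆ E, closure (convexHull ℝ F) ⊆ T := fun F hF =>
      closure_minimal (convexHull_min (hF.trans hET) hT) hTcl
    rw [hsplit] at hpE
    rcases mem_closure_convexHull_union hc (fun e he => hpar e he.1) (fun e he => hpar e he.1)
      hupB hupA hpE with
      h | h | ⟨x, hx, y, hy, a, b, ha, hb, hab, hxy⟩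
    · exact h1 h
    · exact h2 h
    · have := (mem_extremePoints_iff_left.1 hp).2 _ (hsub _ Set.inter_subset_left hx) _
        (hsub _ Set.inter_subset_left hy)
        ⟨a, b, ha, hb, hab, hxy⟩
      exact h1 (this ▸ hx)

end ConvexHullUnion

section Epigraph

variable {V : Type*} [NormedAddCommGroup V]

/-- The epigraph of `u ↦ f (x₀ + u) + (γ/2)‖u‖²`. -/
def parabolicEpigraph (γ : ℝ) (x₀ : V) (f : V → EReal) : Set (V × ℝ) :=
  {e | f (x₀ + e.1) ≤ ((e.2 - γ / 2 * ‖e.1‖ ^ 2 : ℝ) : EReal)}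

lemma add_vertical_mem_parabolicEpigraph {γ : ℝ} {x₀ : V} {f : V → EReal} {e : V × ℝ}
    (he : e ∈ parabolicEpigraph γ x₀ f) {ρ : ℝ} (hρ : 0 ≤ ρ) :
    e + (0, ρ) ∈ parabolicEpigraph γ x₀ f := by
  simp only [parabolicEpigraph, Set.mem_ofPred_eq, Prod.fst_add, add_zero, Prod.snd_add] at *
  exact he.trans (EReal.coe_le_coe_iff.2 (by linarith))

lemma paraboloid_le_of_mem {γ : ℝ} {x₀ : V} {f : V → ℝ≥0∞} {e : V × ℝ}
    (he : e ∈ parabolicEpigraph γ x₀ (fun x => (f x : EReal))) : γ / 2 * ‖e.1‖ ^ 2 ≤ e.2 := by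
  have : ((0 : ℝ) : EReal) ≤ ((e.2 - γ / 2 * ‖e.1‖ ^ 2 : ℝ) : EReal) :=
    le_trans (EReal.coe_ennreal_nonneg _) he
  linarith [EReal.coe_le_coe_iff.1 this]

end Epigraph

section Envelope

lemma EReal.neg_sub_coe_le_neg_coe_iff (F : EReal) (d b : ℝ) :
    -F - (d : EReal) ≤ -(b : EReal) ↔ ((b - d : ℝ) : EReal) ≤ F := by
  induction F with
  | bot =>
    have : -(⊥ : EReal) - (d : EReal) = ⊤ := by simp
    rw [this, ← EReal.coe_neg, top_le_iff, le_bot_iff]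
    exact iff_of_false (EReal.coe_ne_top _) (EReal.coe_ne_bot _)
  | top => simp
  | coe F =>
    norm_cast
    constructor <;> intro h <;> linarith

lemma EReal.neg_sub_coe_le_coe_iff (A : EReal) (d c : ℝ) :
    -A - (d : EReal) ≤ (c : EReal) ↔ ∀ b : ℝ, A ≤ -(b : EReal) → b - d ≤ c := by
  induction A with
  | bot =>
    have : -(⊥ : EReal) - (d : EReal) = ⊤ := by simp
    rw [this]
    simp only [top_le_iff, EReal.coe_ne_top, bot_le, forall_const, false_iff, not_forall]
    exact ⟨c + d + 1, by linarith⟩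
  | top =>
    simp only [EReal.neg_top, EReal.bot_sub, bot_le, top_le_iff, true_iff]
    intro b hb
    exact absurd hb (by rw [← EReal.coe_neg]; exact EReal.coe_ne_top _)
  | coe A =>
    norm_cast
    constructor
    · intro h b hb; linarith
    · intro h; exact h (-A) (by simp)

variable {V : Type*} [NormedAddCommGroup V] [InnerProductSpace ℝ V]

lemma Sgamma2_le_coe_iff (γ : ℝ) (f : V → ℝ≥0∞) (x : V) (c : ℝ) :
    Sgamma2 γ f x ≤ c ↔ ∀ (y : V) (b : ℝ),
      (∀ z, ((b - γ / 2 * ‖z - y‖ ^ 2 : ℝ) : EReal) ≤ f z) → b - γ / 2 * ‖y - x‖ ^ 2 ≤ c := by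
  simp only [Sgamma2, Sgamma, SgammaE, iSup_le_iff, EReal.neg_sub_coe_le_coe_iff,
    EReal.neg_sub_coe_le_neg_coe_iff]

lemma minorant_iff (γ : ℝ) (f : V → ℝ≥0∞) (x₀ w : V) (b : ℝ) :
    (∀ z, ((b - γ / 2 * ‖z - (x₀ + w)‖ ^ 2 : ℝ) : EReal) ≤ f z) ↔
      ∀ e ∈ parabolicEpigraph γ x₀ (fun x => (f x : EReal)),
        b - γ / 2 * ‖w‖ ^ 2 + ⟪γ • w, e.1⟫ ≤ e.2 := by
  have hsq : ∀ u : V, ‖x₀ + u - (x₀ + w)‖ ^ 2 = ‖u‖ ^ 2 - 2 * ⟪w, u⟫ + ‖w‖ ^ 2 := fun u => by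
    rw [add_sub_add_left_eq_sub, norm_sub_sq_real, real_inner_comm]
  constructor
  · intro h e he
    have := EReal.coe_le_coe_iff.1 ((h (x₀ + e.1)).trans he)
    rw [hsq] at this
    rw [real_inner_smul_left]
    linarith
  · intro h z
    obtain ⟨u, rfl⟩ : ∃ u, z = x₀ + u := ⟨z - x₀, by abel⟩
    rcases eq_or_ne (f (x₀ + u)) ⊤ with htop | htop
    · simp [htop]
    · have hf : (f (x₀ + u) : EReal) = ((f (x₀ + u)).toReal : EReal) :=
        (EReal.coe_toReal (by simpa using htop) (by simp)).symm.trans (by simp)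
      have := h (u, (f (x₀ + u)).toReal + γ / 2 * ‖u‖ ^ 2) (by
        change (f (x₀ + u) : EReal) ≤ _
        rw [hf, add_sub_cancel_right])
      rw [hf, EReal.coe_le_coe_iff, hsq]
      rw [real_inner_smul_left] at this
      simp only at this
      linarith

/-- The epigraph of `S_γ²(f)` plus the paraboloid is cut out by the affine minorants of `f` plus the
paraboloid. -/
lemma mem_parabolicEpigraph_Sgamma2_iff {γ : ℝ} (hγ : 0 < γ) (f : V → ℝ≥0∞) (x₀ : V)
    (e : V × ℝ) :
    e ∈ parabolicEpigraph γ x₀ (Sgamma2 γ f) ↔ ∀ (b : ℝ) (v : V),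
      (∀ e' ∈ parabolicEpigraph γ x₀ (fun x => (f x : EReal)), b + ⟪v, e'.1⟫ ≤ e'.2) →
        b + ⟪v, e.1⟫ ≤ e.2 := by
  have hsq : ∀ w : V, ‖x₀ + w - (x₀ + e.1)‖ ^ 2 = ‖w‖ ^ 2 - 2 * ⟪w, e.1⟫ + ‖e.1‖ ^ 2 := fun w => by
    rw [add_sub_add_left_eq_sub, norm_sub_sq_real]
  change Sgamma2 γ f (x₀ + e.1) ≤ _ ↔ _
  rw [Sgamma2_le_coe_iff]
  constructor
  · intro h b v hv
    have hw : γ • γ⁻¹ • v = v := smul_inv_smul₀ hγ.ne' v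
    have := h (x₀ + γ⁻¹ • v) (b + γ / 2 * ‖γ⁻¹ • v‖ ^ 2)
      ((minorant_iff γ f x₀ _ _).2 (by simpa [hw] using hv))
    rw [hsq] at this
    rw [← hw, real_inner_smul_left]
    linarith
  · intro h y b hb
    obtain ⟨w, rfl⟩ : ∃ w, y = x₀ + w := ⟨y - x₀, by abel⟩
    have := h _ _ ((minorant_iff γ f x₀ w b).1 hb)
    rw [real_inner_smul_left] at this
    rw [hsq]
    linarith

lemma convex_parabolicEpigraph_Sgamma2 {γ : ℝ} (hγ : 0 < γ) (f : V → ℝ≥0∞) (x₀ : V) :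
    Convex ℝ (parabolicEpigraph γ x₀ (Sgamma2 γ f)) := by
  intro e he e' he' a b ha hb hab
  rw [mem_parabolicEpigraph_Sgamma2_iff hγ] at *
  intro s v hv
  have h1 := mul_le_mul_of_nonneg_left (he s v hv) ha
  have h2 := mul_le_mul_of_nonneg_left (he' s v hv) hb
  have h3 : s = a * s + b * s := by rw [← add_mul, hab, one_mul]
  simp only [Prod.fst_add, Prod.smul_fst, Prod.snd_add, Prod.smul_snd, inner_add_right,
    real_inner_smul_right, smul_eq_mul]
  linarith

lemma isClosed_parabolicEpigraph_Sgamma2 {γ : ℝ} (hγ : 0 < γ) (f : V → ℝ≥0∞) (x₀ : V) :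
    IsClosed (parabolicEpigraph γ x₀ (Sgamma2 γ f)) := by
  have : parabolicEpigraph γ x₀ (Sgamma2 γ f) = ⋂ (b : ℝ) (v : V)
      (_ : ∀ e ∈ parabolicEpigraph γ x₀ (fun x => (f x : EReal)), b + ⟪v, e.1⟫ ≤ e.2),
      {e : V × ℝ | b + ⟪v, e.1⟫ ≤ e.2} := by
    ext e
    simp only [mem_parabolicEpigraph_Sgamma2_iff hγ, Set.mem_iInter, Set.mem_ofPred_eq]
  rw [this]
  exact isClosed_iInter fun b => isClosed_iInter fun v => isClosed_iInter fun _ =>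
    isClosed_le (by fun_prop) (by fun_prop)

lemma parabolicEpigraph_subset_Sgamma2 {γ : ℝ} (hγ : 0 < γ) (f : V → ℝ≥0∞) (x₀ : V) :
    parabolicEpigraph γ x₀ (fun x => (f x : EReal)) ⊆ parabolicEpigraph γ x₀ (Sgamma2 γ f) :=
  fun e he => (mem_parabolicEpigraph_Sgamma2_iff hγ f x₀ e).2 fun _ _ h => h e he

/-- A lowest point of the epigraph of the envelope belongs to the closed convex hull. -/
lemma mem_closure_convexHull_parabolicEpigraph [CompleteSpace V] {γ : ℝ} (hγ : 0 < γ)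
    (f : V → ℝ≥0∞) (x₀ : V) {m : ℝ} (hm : (0, m) ∈ parabolicEpigraph γ x₀ (Sgamma2 γ f)) :
    (0, m) ∈ closure (convexHull ℝ (parabolicEpigraph γ x₀ (fun x => (f x : EReal)))) := by
  set E := parabolicEpigraph γ x₀ (fun x => (f x : EReal)) with hE
  have hmin : ∀ (b : ℝ) (v : V), (∀ e ∈ E, b + ⟪v, e.1⟫ ≤ e.2) → b ≤ m := fun b v h => by
    simpa using (mem_parabolicEpigraph_Sgamma2_iff hγ f x₀ _).1 hm b v h
  by_contra hcon
  obtain ⟨φ, s, hs, hφ⟩ :=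
    geometric_hahn_banach_point_closed (convex_convexHull ℝ E).closure isClosed_closure hcon
  replace hφ : ∀ e ∈ E, s < φ e := fun e he => hφ e (subset_closure (subset_convexHull ℝ E he))
  set w : V := (InnerProductSpace.toDual ℝ V).symm (φ.comp (.inl ℝ V ℝ)) with hw
  set κ : ℝ := φ (0, 1) with hκ
  have hrep : ∀ e : V × ℝ, φ e = ⟪w, e.1⟫ + κ * e.2 := fun e => by
    have h1 : φ (0, e.2) = e.2 * κ := by
      rw [hκ, ← smul_eq_mul, ← map_smul]; simp
    have h2 : φ (e.1, 0) = ⟪w, e.1⟫ := by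
      rw [hw, InnerProductSpace.toDual_symm_apply]; simp
    rw [mul_comm, ← h1, ← h2, ← map_add]; simp
  rw [hrep] at hs
  simp only [inner_zero_right, zero_add] at hs
  simp only [hrep] at hφ
  obtain ⟨e₀, he₀⟩ : E.Nonempty := by
    by_contra hne
    rw [Set.not_nonempty_iff_eq_empty] at hne
    linarith [hmin (m + 1) 0 (by simp [hne])]
  rcases lt_trichotomy κ 0 with hneg | hzero | hpos
  · have hlow : ∀ ρ : ℝ, 0 ≤ ρ → s < ⟪w, e₀.1⟫ + κ * (e₀.2 + ρ) := fun ρ hρ => by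
      simpa using hφ _ (add_vertical_mem_parabolicEpigraph he₀ hρ)
    have h0 := hlow 0 le_rfl
    have h1 := hlow (-(⟪w, e₀.1⟫ + κ * e₀.2 - s) / κ)
      (div_nonneg_of_nonpos (by linarith) hneg.le)
    rw [mul_add, mul_div_cancel₀ _ hneg.ne] at h1
    linarith
  · rw [hzero, zero_mul] at hs
    have hall : ∀ N : ℝ, 0 ≤ N → N * s ≤ m := fun N hN =>
      hmin (N * s) (-(N • w)) fun e he => by
        have h1 := hφ e he
        have h2 := paraboloid_le_of_mem he
        have h3 : 0 ≤ γ / 2 * ‖e.1‖ ^ 2 := by positivity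
        rw [inner_neg_left, real_inner_smul_left]
        rw [hzero, zero_mul, add_zero] at h1
        nlinarith
    have h0 := hall 0 le_rfl
    have := hall ((m + 1) / s) (by apply div_nonneg <;> linarith)
    rw [div_mul_cancel₀ _ hs.ne'] at this
    linarith
  · have := hmin (s / κ) (-(κ⁻¹ • w)) fun e he => by
      have h1 := hφ e he
      rw [inner_neg_left, real_inner_smul_left, ← sub_eq_add_neg, div_eq_inv_mul, ← mul_sub,
        inv_mul_le_iff₀ hpos]
      linarith
    rw [div_le_iff₀ hpos] at this
    linarith

/-- A weak neighbourhood contains a finite intersection of open slabs. -/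
lemma exists_slabs_of_weak_isOpen {s : Set V} (hs : IsOpen (X := WeakSpace ℝ V) s) {x₀ : V}
    (hx₀ : x₀ ∈ s) : ∃ (Φ : Finset (StrongDual ℝ V)) (δ : ℝ), 0 < δ ∧
      ∀ u : V, (∀ φ ∈ Φ, |φ u| < δ) → x₀ + u ∈ s := by
  obtain ⟨Φ, δ, hδ, h⟩ :=
    ((topDualPairing ℝ V).flip.weakBilin_withSeminorms.mem_nhds_iff (x₀ : V) s).1
      (hs.mem_nhds hx₀)
  refine ⟨Φ, δ, hδ, fun u hu => h ?_⟩
  refine (Seminorm.mem_ball _).2 ?_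
  refine Seminorm.finset_sup_apply_lt hδ fun φ hφ => ?_
  change |φ (x₀ + u - x₀)| < δ
  rw [add_sub_cancel_left]
  exact hu φ hφ

/-- If `S_γ²(f)(x₀) < f(x₀)`, then the lowest point over `x₀` is not extreme in the epigraph. -/
lemma notMem_extremePoints [CompleteSpace V] {γ : ℝ} (hγ : 0 < γ) (f : V → ℝ≥0∞)
    (hwlsc : LowerSemicontinuous (α := WeakSpace ℝ V) f) (x₀ : V) {m : ℝ}
    (hm : (0, m) ∈ parabolicEpigraph γ x₀ (Sgamma2 γ f)) (hmf : (m : EReal) < f x₀) :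
    (0, m) ∉ (parabolicEpigraph γ x₀ (Sgamma2 γ f)).extremePoints ℝ := by
  intro hext
  obtain ⟨m', hgt, hlt⟩ := EReal.exists_between_coe_real hmf
  have hm0 : 0 ≤ m := by
    simpa using (mem_parabolicEpigraph_Sgamma2_iff hγ f x₀ _).1 hm 0 0 fun e he =>
      le_trans (by simp; positivity) (paraboloid_le_of_mem he)
  have hofReal : (ENNReal.ofReal m' : EReal) = m' := by
    rw [EReal.coe_ennreal_ofReal, max_eq_left]
    linarith [EReal.coe_lt_coe_iff.1 hgt]
  obtain ⟨Φ, δ, hδ, hΦ⟩ := exists_slabs_of_weak_isOpen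
    (s := f ⁻¹' Set.Ioi (ENNReal.ofReal m')) (hwlsc.isOpen_preimage _) (x₀ := x₀) (by
      rwa [← hofReal, EReal.coe_ennreal_lt_coe_ennreal_iff] at hlt)
  have hΦ' : ∀ e ∈ parabolicEpigraph γ x₀ (fun x => (f x : EReal)),
      (∀ φ ∈ Φ, |φ e.1| < δ) → m' ≤ e.2 := by
    intro e he hsmall
    have h1 : (m' : EReal) < f (x₀ + e.1) := by
      rw [← hofReal, EReal.coe_ennreal_lt_coe_ennreal_iff]
      exact hΦ e.1 hsmall
    have h2 := EReal.coe_lt_coe_iff.1 (h1.trans_le he)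
    have h3 : 0 ≤ γ / 2 * ‖e.1‖ ^ 2 := by positivity
    linarith
  refine notMem_closure_convexHull_of_cover (half_pos hγ)
    (convex_parabolicEpigraph_Sgamma2 hγ f x₀) (isClosed_parabolicEpigraph_Sgamma2 hγ f x₀) hext
    ({{e | m' ≤ e.2}} ∪ (fun φ : StrongDual ℝ V => {e : V × ℝ | δ ≤ φ e.1}) '' Φ ∪
      (fun φ : StrongDual ℝ V => {e : V × ℝ | φ e.1 ≤ -δ}) '' Φ)
    (((Set.finite_singleton _).union (Φ.finite_toSet.image _)).union (Φ.finite_toSet.image _))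
    _ (parabolicEpigraph_subset_Sgamma2 hγ f x₀) (fun e he => paraboloid_le_of_mem he)
    (fun e he ρ hρ => add_vertical_mem_parabolicEpigraph he hρ) ?_ ?_
    (mem_closure_convexHull_parabolicEpigraph hγ f x₀ hm)
  · rintro B ((rfl | ⟨φ, -, rfl⟩) | ⟨φ, -, rfl⟩)
    · refine ⟨convex_halfSpace_ge (IsLinearMap.mk (by simp) (by simp)) m',
        isClosed_le (by fun_prop) (by fun_prop), ?_, ?_⟩
      · simpa using hgt
      · intro e he ρ hρ
        simp only [Set.mem_ofPred_eq, Prod.snd_add] at *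
        linarith
    · refine ⟨convex_halfSpace_ge (IsLinearMap.mk (by simp) (by simp)) δ,
        isClosed_le (by fun_prop) (by fun_prop), by simpa using hδ, ?_⟩
      intro e he ρ hρ
      simpa using he
    · refine ⟨convex_halfSpace_le (IsLinearMap.mk (by simp) (by simp)) (-δ),
        isClosed_le (by fun_prop) (by fun_prop), by simpa using hδ, ?_⟩
      intro e he ρ hρ
      simpa using he
  · intro e he
    by_cases hsmall : ∀ φ ∈ Φ, |φ e.1| < δ
    · exact ⟨_, .inl (.inl rfl), hΦ' e he hsmall⟩
    · push Not at hsmall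
      obtain ⟨φ, hφ, hδφ⟩ := hsmall
      rcases le_abs'.1 hδφ with h | h
      · exact ⟨_, .inr ⟨φ, hφ, rfl⟩, h⟩
      · exact ⟨_, .inl (.inr ⟨φ, hφ, rfl⟩), h⟩

end Envelope

section Line

variable {V : Type*} [NormedAddCommGroup V] [InnerProductSpace ℝ V]

/-- A non-extreme lowest point of a convex epigraph is interior to a nonvertical segment along which
the lower boundary is affine. -/
lemma exists_affine_direction {T : Set (V × ℝ)} (hT : Convex ℝ T)
    (hup : ∀ e ∈ T, ∀ ρ : ℝ, 0 ≤ ρ → e + (0, ρ) ∈ T) {m : ℝ}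
    (hm : ∀ s : ℝ, (0, s) ∈ T ↔ m ≤ s) (hext : (0, m) ∉ T.extremePoints ℝ) :
    ∃ (ν : V) (a t₀ : ℝ), ‖ν‖ = 1 ∧ 0 < t₀ ∧
      ∀ t ∈ Set.Ioo (-t₀) t₀, ∀ s : ℝ, (t • ν, s) ∈ T ↔ m + a * t ≤ s := by
  rw [mem_extremePoints_iff_left] at hext
  push Not at hext
  obtain ⟨⟨u, r⟩, hx, ⟨u', r'⟩, hy, ⟨k, l, hk, hl, hkl, hxy⟩, hne⟩ := hext ((hm m).2 le_rfl)
  simp only [Prod.smul_mk, Prod.mk_add_mk, Prod.mk.injEq, smul_eq_mul] at hxy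
  obtain ⟨hu, hr⟩ := hxy
  have huu' : u - u' ≠ 0 := by
    intro h
    obtain rfl := sub_eq_zero.1 h
    rw [← add_smul, hkl, one_smul] at hu
    subst hu
    have h1 := (hm r).1 hx
    have h2 := (hm r').1 hy
    refine hne (Prod.ext rfl (le_antisymm ?_ h1))
    by_contra! h3
    have h4 := mul_lt_mul_of_pos_left (show m < r from h3) hk
    have h5 := mul_le_mul_of_nonneg_left h2 hl.le
    have h6 : k * m + l * m = m := by rw [← add_mul, hkl, one_mul]
    linarith
  set d := ‖u - u'‖ with hd
  have hdpos : 0 < d := norm_pos_iff.2 huu'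
  have hmem : ∀ t, |t| < min k l * d →
      (t • d⁻¹ • (u - u'), m + (r - r') / d * t) ∈ T := by
    intro t ht
    have hτ : |t / d| < min k l := by rwa [abs_div, abs_of_pos hdpos, div_lt_iff₀ hdpos]
    obtain ⟨hτ1, hτ2⟩ := lt_min_iff.1 hτ
    have := hT hx hy (a := k + t / d) (b := l - t / d) (by linarith [neg_abs_le (t / d)])
      (by linarith [le_abs_self (t / d)]) (by linarith)
    convert this using 1
    ext1
    · have : (k + t / d) • u + (l - t / d) • u' = (k • u + l • u') + (t / d) • (u - u') := by
        module
      simp only [Prod.smul_mk, Prod.mk_add_mk]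
      rw [this, hu, zero_add, smul_smul, div_eq_mul_inv]
    · simp only [Prod.smul_mk, Prod.mk_add_mk, smul_eq_mul, ← hr]
      ring
  refine ⟨d⁻¹ • (u - u'), (r - r') / d, min k l * d, ?_, by positivity, fun t ht s => ?_⟩
  · rw [norm_smul, norm_inv, norm_norm, ← hd, inv_mul_cancel₀ hdpos.ne']
  have ht' := abs_lt.2 ht
  constructor
  · intro hs
    have hneg := hmem (-t) (by rwa [abs_neg])
    have hmid := hT hs hneg (a := 1 / 2) (b := 1 / 2) (by norm_num) (by norm_num) (by norm_num)
    have hz : (1 / 2 : ℝ) • (t • d⁻¹ • (u - u'), s) +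
        (1 / 2 : ℝ) • ((-t) • d⁻¹ • (u - u'), m + (r - r') / d * (-t)) =
        ((0 : V), 1 / 2 * s + 1 / 2 * (m + (r - r') / d * (-t))) := by
      ext1
      · simp
      · simp
    rw [hz, hm] at hmid
    linarith
  · intro hs
    simpa using hup _ (hmem t ht') (s - (m + (r - r') / d * t)) (by linarith)

end Line

lemma deriv_deriv_eq_of_eqOn_quadratic {F : ℝ → ℝ} {m a γ t₀ : ℝ}
    (hF : ∀ t ∈ Set.Ioo (-t₀) t₀, F t = m + (a * t - γ / 2 * t ^ 2)) :
    ∀ t ∈ Set.Ioo (-t₀) t₀, deriv (deriv F) t = -γ := by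
  have hnhds : ∀ t ∈ Set.Ioo (-t₀) t₀, Set.Ioo (-t₀) t₀ ∈ 𝓝 t := fun t ht =>
    isOpen_Ioo.mem_nhds ht
  have h1 : ∀ t ∈ Set.Ioo (-t₀) t₀, deriv F t = a - γ * t := fun t ht => by
    have heq : F =ᶠ[𝓝 t] fun t => m + (a * t - γ / 2 * t ^ 2) :=
      eventually_of_mem (hnhds t ht) hF
    have hd : HasDerivAt (fun t : ℝ => m + (a * t - γ / 2 * t ^ 2))
        (a * 1 - γ / 2 * ((2 : ℕ) * t ^ 1)) t :=
      (((hasDerivAt_id t).const_mul a).sub ((hasDerivAt_pow 2 t).const_mul (γ / 2))).const_add m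
    rw [heq.deriv_eq, hd.deriv]
    push_cast
    ring
  intro t ht
  have heq : deriv F =ᶠ[𝓝 t] fun t => a - γ * t := eventually_of_mem (hnhds t ht) h1
  have hd : HasDerivAt (fun t : ℝ => a - γ * t) (-(γ * 1)) t :=
    ((hasDerivAt_id t).const_mul γ).const_sub a
  rw [heq.deriv_eq, hd.deriv, mul_one]

/-- If `f : V → [0,∞]` is weakly l.s.c., `γ > 0` and
`S_γ²(f)(x₀) < f(x₀)`, then there are a unit vector `ν`, a slope `a` and `t₀ > 0` such that
`S_γ²(f)(x₀ + tν) = S_γ²(f)(x₀) + a·t - (γ/2)t²` on `(-t₀,t₀)`; in particular this function of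
`t` has second derivative `-γ` there. -/
theorem statement9 {V : Type*} [NormedAddCommGroup V] [InnerProductSpace ℝ V]
    [CompleteSpace V] [TopologicalSpace.SeparableSpace V]
    (f : V → ℝ≥0∞) (hwlsc : LowerSemicontinuous (α := WeakSpace ℝ V) f)
    (γ : ℝ) (hγ : 0 < γ) (x₀ : V) (hx₀ : Sgamma2 γ f x₀ < (f x₀ : EReal)) :
    ∃ (ν : V) (a t₀ : ℝ), ‖ν‖ = 1 ∧ 0 < t₀ ∧
      (∀ t ∈ Set.Ioo (-t₀) t₀,
        Sgamma2 γ f (x₀ + t • ν) = Sgamma2 γ f x₀ + ((a * t - γ / 2 * t ^ 2 : ℝ) : EReal)) ∧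
      (∀ t ∈ Set.Ioo (-t₀) t₀,
        deriv (deriv (fun s : ℝ => (Sgamma2 γ f (x₀ + s • ν)).toReal)) t = -γ) := by
  have hbot : Sgamma2 γ f x₀ ≠ ⊥ := fun h => by
    have := (Sgamma2_le_coe_iff γ f x₀ (-1)).1 (h ▸ bot_le) x₀ 0 fun z =>
      le_trans (EReal.coe_le_coe_iff.2 (by rw [zero_sub, neg_nonpos]; positivity))
        (EReal.coe_ennreal_nonneg _)
    norm_num at this
  obtain ⟨m, hm⟩ : ∃ m : ℝ, Sgamma2 γ f x₀ = m :=
    ⟨_, (EReal.coe_toReal (ne_top_of_lt hx₀) hbot).symm⟩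
  have hvert : ∀ s : ℝ, (0, s) ∈ parabolicEpigraph γ x₀ (Sgamma2 γ f) ↔ m ≤ s := fun s => by
    simp [parabolicEpigraph, hm]
  obtain ⟨ν, a, t₀, hν, ht₀, hline⟩ := exists_affine_direction
    (convex_parabolicEpigraph_Sgamma2 hγ f x₀)
    (fun e he ρ hρ => add_vertical_mem_parabolicEpigraph he hρ) hvert
    (notMem_extremePoints hγ f hwlsc x₀ ((hvert m).2 le_rfl) (hm ▸ hx₀))
  have hval : ∀ t ∈ Set.Ioo (-t₀) t₀,
      Sgamma2 γ f (x₀ + t • ν) = ((m + (a * t - γ / 2 * t ^ 2) : ℝ) : EReal) := by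
    intro t ht
    have hle : ∀ s : ℝ, Sgamma2 γ f (x₀ + t • ν) ≤ s ↔ m + (a * t - γ / 2 * t ^ 2) ≤ s := by
      intro s
      have hnorm : ‖t • ν‖ ^ 2 = t ^ 2 := by
        rw [norm_smul, hν, mul_one, Real.norm_eq_abs, sq_abs]
      have := hline t ht (s + γ / 2 * t ^ 2)
      simp only [parabolicEpigraph, Set.mem_ofPred_eq, hnorm, add_sub_cancel_right] at this
      rw [this]
      constructor <;> intro h <;> linarith
    refine le_antisymm ((hle _).2 le_rfl) (EReal.le_of_forall_lt_iff_le.1 fun s hs => ?_)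
    exact EReal.coe_le_coe_iff.2 ((hle s).1 hs.le)
  refine ⟨ν, a, t₀, hν, ht₀, fun t ht => ?_,
    deriv_deriv_eq_of_eqOn_quadratic (m := m) (a := a) fun t ht => ?_⟩
  · rw [hval t ht, hm, EReal.coe_add]
  · rw [hval t ht, EReal.toReal_coe]
end
end

section
/- Let g : V → (−∞,+∞] be a weakly lower semicontinuous function on a separable real Hilbert space V, not identically +∞, such that its biconjugate g** is proper and coercive (all sublevel sets of g** are bounded). Then for every x ∈ V, at least one of the following holds: (i) g(x) = g**(x); (ii) there exist a unit vector ν ∈ V, real numbers a, b, and t₀ > 0 such that g**(x + tν) = a·t + b for all t ∈ (−t₀,t₀), i.e., t ↦ g**(x + tν) is affine on (−t₀,t₀). -/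
open scoped InnerProductSpace RealInnerProductSpace ENNReal Topology
open Filter

noncomputable section

section ConvexCompact

variable {E : Type*} [AddCommGroup E] [Module ℝ E] [TopologicalSpace E]
  [IsTopologicalAddGroup E] [ContinuousSMul ℝ E]

protected theorem IsCompact.convexJoin {s t : Set E} (hs : IsCompact s) (ht : IsCompact t) :
    IsCompact (convexJoin ℝ s t) := by
  have himage : convexJoin ℝ s t =
      (fun q : (E × E) × ℝ => (1 - q.2) • q.1.1 + q.2 • q.1.2) ''
        ((s ×ˢ t) ×ˢ Set.Icc (0 : ℝ) 1) := by
    ext z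
    simp only [mem_convexJoin, segment_eq_image, Set.mem_image, Set.mem_prod, Prod.exists]
    constructor
    · rintro ⟨a, ha, b, hb, θ, hθ, rfl⟩
      exact ⟨a, b, θ, ⟨⟨ha, hb⟩, hθ⟩, rfl⟩
    · rintro ⟨a, b, θ, ⟨⟨ha, hb⟩, hθ⟩, rfl⟩
      exact ⟨a, ha, b, hb, θ, hθ, rfl⟩
  rw [himage]
  exact ((hs.prod ht).prod isCompact_Icc).image (by fun_prop)

/-- Finitely many compact convex subsets of a convex set `D` lie in a single compact convex
subset of `D`. -/
theorem exists_isCompact_convex_superset {ι : Type*} {D : Set E} (hD : Convex ℝ D)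
    (K : ι → Set E) (I : Finset ι) (hK : ∀ i ∈ I, IsCompact (K i) ∧ Convex ℝ (K i) ∧ K i ⊆ D) :
    ∃ H, IsCompact H ∧ Convex ℝ H ∧ H ⊆ D ∧ ∀ i ∈ I, K i ⊆ H := by
  classical
  induction I using Finset.induction_on with
  | empty => exact ⟨∅, isCompact_empty, convex_empty, Set.empty_subset _, by simp⟩
  | insert j I _ ih =>
    obtain ⟨H, hHc, hHconv, hHD, hH⟩ := ih fun i hi => hK i (Finset.mem_insert_of_mem hi)
    obtain ⟨hjc, hjconv, hjD⟩ := hK j (Finset.mem_insert_self j I)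
    rcases H.eq_empty_or_nonempty with rfl | hHne
    · refine ⟨K j, hjc, hjconv, hjD, fun i hi => ?_⟩
      rcases Finset.mem_insert.1 hi with rfl | hi
      · exact subset_rfl
      · exact (hH i hi).trans (Set.empty_subset _)
    rcases (K j).eq_empty_or_nonempty with hj | hjne
    · refine ⟨H, hHc, hHconv, hHD, fun i hi => ?_⟩
      rcases Finset.mem_insert.1 hi with rfl | hi
      · exact hj ▸ Set.empty_subset _
      · exact hH i hi
    · refine ⟨convexJoin ℝ (K j) H, hjc.convexJoin hHc, hjconv.convexJoin hHconv,
        convexJoin_subset hjD hHD hD, fun i hi => ?_⟩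
      rcases Finset.mem_insert.1 hi with rfl | hi
      · exact subset_convexJoin_left hHne
      · exact (hH i hi).trans (subset_convexJoin_right hjne)

/-- **Choquet's lemma**: the slices of a compact convex set which contain a given extreme point
form a neighbourhood base of that point. -/
theorem exists_slice_subset_of_mem_extremePoints [T2Space E] [LocallyConvexSpace ℝ E]
    {C : Set E} (hC : IsCompact C) (hconv : Convex ℝ C) {z : E} (hz : z ∈ C.extremePoints ℝ)
    {U : Set E} (hU : IsOpen U) (hzU : z ∈ U) :
    ∃ (F : StrongDual ℝ E) (u : ℝ), F z < u ∧ ∀ w ∈ C, F w < u → w ∈ U := by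
  have hsep : ∀ w, ∃ (F : StrongDual ℝ E) (u : ℝ), w ≠ z → F z < u ∧ u < F w := by
    intro w
    by_cases hw : w = z
    · exact ⟨0, 0, fun h => absurd hw h⟩
    · obtain ⟨F, hF⟩ := geometric_hahn_banach_point_point (Ne.symm hw)
      obtain ⟨u, hu⟩ := exists_between hF
      exact ⟨F, u, fun _ => hu⟩
  choose F u hFu using hsep
  have hne : ∀ w ∈ C \ U, w ≠ z := fun w hw h => hw.2 (h ▸ hzU)
  obtain ⟨I, hI, hcover⟩ := (hC.diff hU).elim_nhds_subcover (fun w => {v | u w < F w v})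
    fun w hw => (isOpen_lt continuous_const (F w).continuous).mem_nhds (hFu w (hne w hw)).2
  obtain ⟨H, hHc, hHconv, hHD, hH⟩ := exists_isCompact_convex_superset
    (hconv.mem_extremePoints_iff_convex_sdiff.1 hz).2 (fun w => C ∩ {v | u w ≤ F w v}) I
    fun w hw => ⟨hC.inter_right (isClosed_le continuous_const (F w).continuous),
      hconv.inter (convex_halfSpace_ge (F w).isLinear _), fun v hv => ⟨hv.1, by
        rintro rfl
        exact (hFu w (hne w (hI w hw))).1.not_ge hv.2⟩⟩
  obtain ⟨G, v, hGz, hG⟩ := geometric_hahn_banach_point_closed hHconv hHc.isClosed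
    fun hzH => (hHD hzH).2 rfl
  refine ⟨G, v, hGz, fun w hwC hw => by_contra fun hwU => ?_⟩
  obtain ⟨i, hi, hwi⟩ := Set.mem_iUnion₂.1 (hcover ⟨hwC, hwU⟩)
  exact lt_asymm hw (hG w (hH i hi ⟨hwC, (show u i < F i w from hwi).le⟩))

end ConvexCompact

section WeakTopology

variable {V : Type*} [NormedAddCommGroup V] [InnerProductSpace ℝ V]

theorem continuous_inner_weakSpace (p : V) :
    Continuous fun y : WeakSpace ℝ V => (⟪p, (y : V)⟫_ℝ : ℝ) :=
  WeakBilin.eval_continuous (topDualPairing ℝ V).flip (innerSL ℝ p)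

theorem isCompact_closedBall_weakSpace [CompleteSpace V] (R : ℝ) :
    IsCompact (toWeakSpace ℝ V '' Metric.closedBall (0 : V) R) := by
  have hcont : Continuous fun φ : WeakDual ℝ V =>
      toWeakSpace ℝ V ((InnerProductSpace.toDual ℝ V).symm (WeakDual.toStrongDual φ)) := by
    refine WeakBilin.continuous_of_continuous_eval _ fun ℓ => ?_
    refine (WeakDual.eval_continuous ((InnerProductSpace.toDual ℝ V).symm ℓ)).congr fun φ => ?_
    change WeakDual.toStrongDual φ ((InnerProductSpace.toDual ℝ V).symm ℓ) =
      ℓ ((InnerProductSpace.toDual ℝ V).symm (WeakDual.toStrongDual φ))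
    rw [← InnerProductSpace.toDual_symm_apply, ← InnerProductSpace.toDual_symm_apply,
      real_inner_comm]
  convert (WeakDual.isCompact_closedBall (𝕜 := ℝ) (0 : StrongDual ℝ V) R).image hcont using 1
  ext y
  constructor
  · rintro ⟨y, hy, rfl⟩
    refine ⟨StrongDual.toWeakDual (InnerProductSpace.toDual ℝ V y), ?_, ?_⟩
    · simpa using hy
    · exact congrArg (toWeakSpace ℝ V) ((InnerProductSpace.toDual ℝ V).symm_apply_apply y)
  · rintro ⟨φ, hφ, rfl⟩
    refine ⟨_, ?_, rfl⟩
    simpa using hφ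

end WeakTopology

section Legendre

variable {V : Type*} [NormedAddCommGroup V] [InnerProductSpace ℝ V]

theorem legendre_le_coe_iff (h : V → EReal) (y : V) (s : ℝ) :
    legendre h y ≤ s ↔ ∀ p, ((⟪p, y⟫_ℝ - s : ℝ) : EReal) ≤ h p := by
  rw [legendre, iSup_le_iff]
  refine forall_congr' fun p => ?_
  induction h p with
  | bot => simpa using EReal.coe_ne_bot (⟪p, y⟫_ℝ - s)
  | top => simp
  | coe r =>
    norm_cast
    constructor <;> intro <;> linarith

theorem legendre_legendre_le (g : V → EReal) (hg : ∀ y, g y ≠ ⊥) (y : V) :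
    legendre (legendre g) y ≤ g y := by
  induction hgy : g y with
  | bot => exact absurd hgy (hg y)
  | top => exact le_top
  | coe s =>
    rw [legendre_le_coe_iff]
    intro p
    calc ((⟪p, y⟫_ℝ - s : ℝ) : EReal) = ((⟪y, p⟫_ℝ : ℝ) : EReal) - g y := by
          rw [hgy, real_inner_comm]; rfl
      _ ≤ legendre g p := le_iSup (fun y : V => ((⟪y, p⟫_ℝ : ℝ) : EReal) - g y) y

theorem coe_le_legendre_legendre_of_affine_le (g : V → EReal) (p : V) (α : ℝ)
    (hg : ∀ y, ((⟪p, y⟫_ℝ + α : ℝ) : EReal) ≤ g y) (x : V) :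
    ((⟪p, x⟫_ℝ + α : ℝ) : EReal) ≤ legendre (legendre g) x := by
  have hconj : legendre g p ≤ ((-α : ℝ) : EReal) := by
    rw [legendre_le_coe_iff]
    intro y
    simpa [real_inner_comm] using hg y
  calc ((⟪p, x⟫_ℝ + α : ℝ) : EReal) = ((⟪p, x⟫_ℝ : ℝ) : EReal) - ((-α : ℝ) : EReal) := by
        norm_cast; ring
    _ ≤ ((⟪p, x⟫_ℝ : ℝ) : EReal) - legendre g p := EReal.sub_le_sub le_rfl hconj
    _ ≤ _ := le_iSup (fun p : V => ((⟪p, x⟫_ℝ : ℝ) : EReal) - legendre g p) p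

/-- The epigraph of the Legendre transform of `h`, in the product of `V` with its weak topology
and the real line. -/
def legendreEpigraph (h : V → EReal) : Set (WeakSpace ℝ V × ℝ) :=
  {z | legendre h z.1 ≤ (z.2 : EReal)}

theorem legendreEpigraph_eq_iInter (h : V → EReal) :
    legendreEpigraph h =
      ⋂ p : V, {z | ((⟪p, (z.1 : V)⟫_ℝ - z.2 : ℝ) : EReal) ≤ h p} := by
  ext z
  simp only [Set.mem_iInter]
  exact legendre_le_coe_iff h z.1 z.2

theorem isClosed_legendreEpigraph (h : V → EReal) : IsClosed (legendreEpigraph h) := by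
  rw [legendreEpigraph_eq_iInter]
  refine isClosed_iInter fun p => isClosed_Iic.preimage (continuous_coe_real_ereal.comp ?_)
  exact ((continuous_inner_weakSpace p).comp continuous_fst).sub continuous_snd

theorem convex_legendreEpigraph (h : V → EReal) : Convex ℝ (legendreEpigraph h) := by
  rw [legendreEpigraph_eq_iInter]
  refine convex_iInter fun p => ?_
  have hconv : Convex ℝ {r : ℝ | (r : EReal) ≤ h p} := by
    refine Set.OrdConnected.convex ⟨fun a _ b hb c hc => ?_⟩
    exact (EReal.coe_le_coe_iff.2 hc.2).trans hb
  rintro ⟨y, s⟩ hz ⟨w, t⟩ hw a b ha hb hab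
  change V at y w
  have hmem := hconv hz hw ha hb hab
  have heq : a • (⟪p, y⟫_ℝ - s) + b • (⟪p, w⟫_ℝ - t) =
      ⟪p, a • y + b • w⟫_ℝ - (a * s + b * t) := by
    rw [inner_add_right, inner_smul_right, inner_smul_right]
    simp only [smul_eq_mul]
    ring
  rw [heq] at hmem
  exact hmem

theorem legendre_combo_le (h : V → EReal) {y₁ y₂ : V} {s₁ s₂ a b : ℝ}
    (h₁ : legendre h y₁ ≤ s₁) (h₂ : legendre h y₂ ≤ s₂)
    (ha : 0 ≤ a) (hb : 0 ≤ b) (hab : a + b = 1) :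
    legendre h (a • y₁ + b • y₂) ≤ ((a * s₁ + b * s₂ : ℝ) : EReal) :=
  convex_legendreEpigraph h (x := (y₁, s₁)) h₁ (y := (y₂, s₂)) h₂ ha hb hab

/-- A Legendre transform which is finite at one point is bounded below on bounded sets. -/
theorem exists_coe_le_legendre_of_norm_le (h : V → EReal) {x : V} {r : ℝ}
    (hx : legendre h x = r) (R : ℝ) :
    ∃ m : ℝ, ∀ y : V, ‖y‖ ≤ R → (m : EReal) ≤ legendre h y := by
  have hle := (legendre_le_coe_iff h x r).1 hx.le
  obtain ⟨p, hp⟩ : ∃ p, h p ≠ ⊤ := by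
    by_contra! htop
    have : legendre h x = ⊥ := by simp [legendre, htop]
    rw [hx] at this
    exact EReal.coe_ne_bot r this
  have hbot : h p ≠ ⊥ := fun hp' => EReal.coe_ne_bot _ (le_bot_iff.1 (hp' ▸ hle p))
  lift h p to ℝ using ⟨hp, hbot⟩ with c hc
  refine ⟨-(‖p‖ * R) - c, fun y hy => ?_⟩
  calc ((-(‖p‖ * R) - c : ℝ) : EReal) ≤ ((⟪p, y⟫_ℝ - c : ℝ) : EReal) := by
        refine EReal.coe_le_coe_iff.2 ?_
        have h₁ := (abs_le.1 (abs_real_inner_le_norm p y)).1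
        have h₂ := mul_le_mul_of_nonneg_left hy (norm_nonneg p)
        linarith
    _ = ((⟪p, y⟫_ℝ : ℝ) : EReal) - h p := by rw [← hc]; rfl
    _ ≤ legendre h y := le_iSup (fun p : V => ((⟪p, y⟫_ℝ : ℝ) : EReal) - h p) p

theorem isCompact_legendreEpigraph_inter [CompleteSpace V] (h : V → EReal)
    {x : V} {r : ℝ} (hx : legendre h x = r) (c : ℝ)
    (hbdd : Bornology.IsBounded {y : V | legendre h y ≤ (c : EReal)}) :
    IsCompact (legendreEpigraph h ∩ {z | z.2 ≤ c}) := by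
  obtain ⟨R, hR⟩ := (Metric.isBounded_iff_subset_closedBall (0 : V)).1 hbdd
  obtain ⟨m, hm⟩ := exists_coe_le_legendre_of_norm_le h hx R
  refine ((isCompact_closedBall_weakSpace R).prod (isCompact_Icc (a := m) (b := c))).of_isClosed_subset
    ((isClosed_legendreEpigraph h).inter (isClosed_le continuous_snd continuous_const)) ?_
  rintro ⟨y, s⟩ ⟨hys, hsc : s ≤ c⟩
  have hys' : legendre h y ≤ (s : EReal) := hys
  have hy : (y : V) ∈ Metric.closedBall (0 : V) R :=
    hR (hys'.trans (EReal.coe_le_coe_iff.2 hsc))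
  exact ⟨⟨y, hy, rfl⟩, EReal.coe_le_coe_iff.1 ((hm y (mem_closedBall_zero_iff.1 hy)).trans hys'), hsc⟩

/-- If the graph of a Legendre transform lies below a nonvertical segment around one of its
points, then the transform is affine along that segment. -/
theorem exists_affine_of_le (h : V → EReal) {x d : V} {r σ τ : ℝ} (hx : legendre h x = r)
    (hd : d ≠ 0) (hτ : 0 < τ)
    (hle : ∀ t ∈ Set.Ioo (-τ) τ, legendre h (x + t • d) ≤ ((r + t * σ : ℝ) : EReal)) :
    ∃ (ν : V) (a b t₀ : ℝ), ‖ν‖ = 1 ∧ 0 < t₀ ∧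
      ∀ t ∈ Set.Ioo (-t₀) t₀, legendre h (x + t • ν) = ((a * t + b : ℝ) : EReal) := by
  have heq : ∀ t ∈ Set.Ioo (-τ) τ, legendre h (x + t • d) = ((r + t * σ : ℝ) : EReal) := by
    refine fun t ht => (hle t ht).antisymm (le_of_not_gt fun hlt => ?_)
    obtain ⟨s, hs, hst⟩ := EReal.exists_between_coe_real hlt
    have hst' : s < r + t * σ := EReal.coe_lt_coe_iff.1 hst
    have hmid := legendre_combo_le h hs.le (hle (-t) ⟨by linarith [ht.2], by linarith [ht.1]⟩)
      (a := 1 / 2) (b := 1 / 2) (by norm_num) (by norm_num) (by norm_num)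
    rw [show (1 / 2 : ℝ) • (x + t • d) + (1 / 2 : ℝ) • (x + -t • d) = x by module, hx] at hmid
    linarith [EReal.coe_le_coe_iff.1 hmid]
  have hd' : 0 < ‖d‖ := norm_pos_iff.2 hd
  refine ⟨‖d‖⁻¹ • d, σ / ‖d‖, r, τ * ‖d‖, norm_smul_inv_norm (𝕜 := ℝ) hd, by positivity,
    fun t ht => ?_⟩
  have ht' : t * ‖d‖⁻¹ ∈ Set.Ioo (-τ) τ := by
    rw [← div_eq_mul_inv]
    exact ⟨by rw [lt_div_iff₀ hd']; linarith [ht.1], by rw [div_lt_iff₀ hd']; exact ht.2⟩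
  rw [smul_smul, heq _ ht']
  congr 1
  ring

theorem mem_extremePoints_legendreEpigraph (h : V → EReal) {x : V} {r : ℝ}
    (hx : legendre h x = r)
    (haff : ¬ ∃ (ν : V) (a b t₀ : ℝ), ‖ν‖ = 1 ∧ 0 < t₀ ∧
      ∀ t ∈ Set.Ioo (-t₀) t₀, legendre h (x + t • ν) = ((a * t + b : ℝ) : EReal)) :
    ((x, r) : WeakSpace ℝ V × ℝ) ∈ (legendreEpigraph h).extremePoints ℝ := by
  refine ⟨hx.le, ?_⟩
  rintro ⟨y₁, s₁⟩ h₁ ⟨y₂, s₂⟩ h₂ ⟨a, b, ha, hb, hab, hcombo⟩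
  change V at y₁ y₂
  have h₁' : legendre h y₁ ≤ (s₁ : EReal) := h₁
  have h₂' : legendre h y₂ ≤ (s₂ : EReal) := h₂
  have hxy : a • y₁ + b • y₂ = x := congrArg Prod.fst hcombo
  have hrs : a * s₁ + b * s₂ = r := congrArg Prod.snd hcombo
  have hy : y₁ = y₂ := by
    by_contra hne
    refine haff (exists_affine_of_le h hx (sub_ne_zero.2 (Ne.symm hne)) (σ := s₂ - s₁)
      (lt_min ha hb) fun t ht => ?_)
    have hta : t < a := ht.2.trans_le (min_le_left _ _)
    have htb : -b < t := lt_of_le_of_lt (neg_le_neg (min_le_right _ _)) ht.1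
    have hle := legendre_combo_le h h₁' h₂' (a := a - t) (b := b + t)
      (by linarith) (by linarith) (by linarith)
    rw [← hxy, ← hrs]
    convert hle using 2
    · module
    · ring
  subst hy
  have hxy₁ : y₁ = x := by rw [← hxy, ← add_smul, hab, one_smul]
  subst hxy₁
  rw [hx, EReal.coe_le_coe_iff] at h₁' h₂'
  have : s₁ = r := by
    refine le_antisymm (le_of_mul_le_mul_left ?_ ha) h₁'
    linear_combination hrs + b * h₂' - r * hab
  subst this
  rfl

end Legendre

/-- Brøndsted-type theorem. Let `g` be weakly l.s.c., not identically `+∞`,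
never `-∞`, with proper coercive biconjugate `g**`. Then for every `x`: either `g(x) = g**(x)`,
or there is a unit direction `ν` along which `g**` is affine near `x`. -/
theorem statement10 {V : Type*} [NormedAddCommGroup V] [InnerProductSpace ℝ V]
    [CompleteSpace V] [TopologicalSpace.SeparableSpace V]
    (g : V → EReal)
    (hwlsc : LowerSemicontinuous (α := WeakSpace ℝ V) g)
    (hnebot : ∀ x, g x ≠ ⊥) (hproper : ∃ x, g x ≠ ⊤)
    (hss_nebot : ∀ x, legendre (legendre g) x ≠ ⊥)
    (hss_proper : ∃ x, legendre (legendre g) x ≠ ⊤)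
    (hcoercive : ∀ r : ℝ, Bornology.IsBounded {x : V | legendre (legendre g) x ≤ (r : EReal)})
    (x : V) :
    g x = legendre (legendre g) x ∨
      ∃ (ν : V) (a b t₀ : ℝ), ‖ν‖ = 1 ∧ 0 < t₀ ∧
        ∀ t ∈ Set.Ioo (-t₀) t₀,
          legendre (legendre g) (x + t • ν) = ((a * t + b : ℝ) : EReal) := by
  refine or_iff_not_imp_right.2 fun haff => ?_
  have hle := legendre_legendre_le g hnebot
  by_contra hne
  have hlt : legendre (legendre g) x < g x := (hle x).lt_of_ne (Ne.symm hne)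
  obtain ⟨c, hfc, hcg⟩ := EReal.exists_between_coe_real hlt
  obtain ⟨r, hr⟩ : ∃ r : ℝ, legendre (legendre g) x = r :=
    ⟨_, (EReal.coe_toReal hlt.ne_top (hss_nebot x)).symm⟩
  have hrc : r < c := EReal.coe_lt_coe_iff.1 (hr ▸ hfc)
  have hconvE := convex_legendreEpigraph (legendre g)
  have : LocallyConvexSpace ℝ (WeakSpace ℝ V) := WeakBilin.locallyConvexSpace
  have hext : ((x, r) : WeakSpace ℝ V × ℝ) ∈
      (legendreEpigraph (legendre g) ∩ {z | z.2 ≤ c}).extremePoints ℝ :=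
    inter_extremePoints_subset_extremePoints_of_subset Set.inter_subset_left
      ⟨⟨hr.le, hrc.le⟩, mem_extremePoints_legendreEpigraph (legendre g) hr haff⟩
  obtain ⟨F, u, hFx, hF⟩ := exists_slice_subset_of_mem_extremePoints
    (isCompact_legendreEpigraph_inter (legendre g) hr c (hcoercive c))
    (hconvE.inter (convex_halfSpace_le (LinearMap.snd ℝ (WeakSpace ℝ V) ℝ).isLinear c)) hext
    (((hwlsc.isOpen_preimage (c : EReal)).preimage continuous_fst).inter
      (isOpen_lt continuous_snd continuous_const)) ⟨hcg, hrc⟩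
  obtain ⟨p, q, hpq⟩ : ∃ (p : V) (q : ℝ), ∀ (y : V) (s : ℝ),
      F ((y, s) : WeakSpace ℝ V × ℝ) = ⟪p, y⟫_ℝ + q * s := by
    refine ⟨(InnerProductSpace.toDual ℝ V).symm
      ((F.comp (ContinuousLinearMap.inl ℝ (WeakSpace ℝ V) ℝ)).comp (toWeakSpaceCLM ℝ V)),
      F (0, 1), fun y s => ?_⟩
    rw [InnerProductSpace.toDual_symm_apply]
    have hsplit : ((y, s) : WeakSpace ℝ V × ℝ) =
        ((y, 0) : WeakSpace ℝ V × ℝ) + s • ((0, 1) : WeakSpace ℝ V × ℝ) := by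
      refine Prod.ext ?_ (by simp)
      change y = y + s • (0 : V)
      simp
    rw [hsplit, map_add, map_smul, smul_eq_mul, mul_comm]
    rfl
  rw [hpq] at hFx
  have hq : 0 < q := by
    by_contra! hq
    have hmem := hF (x, c) ⟨hfc.le, le_refl c⟩ (by rw [hpq]; nlinarith)
    exact lt_irrefl c hmem.2
  have hslice : ∀ (y : V) (s : ℝ), legendre (legendre g) y ≤ s → ⟪p, y⟫_ℝ + q * s < u →
      s < c ∧ (c : EReal) < g y := by
    intro y s hys hysu
    have hsc : s ≤ c := by
      by_contra! hcs
      have hpos : 0 < s - r := by linarith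
      have hθ₀ : 0 < (c - r) / (s - r) := div_pos (by linarith) hpos
      have hθ₁ : (c - r) / (s - r) < 1 := (div_lt_one hpos).2 (by linarith)
      have hθ : (c - r) / (s - r) * (s - r) = c - r := div_mul_cancel₀ _ hpos.ne'
      generalize (c - r) / (s - r) = θ at hθ₀ hθ₁ hθ
      have hcombo := legendre_combo_le (legendre g) hr.le hys (a := 1 - θ) (b := θ)
        (by linarith) hθ₀.le (by ring)
      have hc : (1 - θ) * r + θ * s = c := by linear_combination hθ
      rw [hc] at hcombo
      have hmem := hF ((1 - θ) • x + θ • y, c) ⟨hcombo, le_refl c⟩ (by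
        rw [hpq, inner_add_right, inner_smul_right, inner_smul_right, ← hc]
        nlinarith [mul_lt_mul_of_pos_left hysu hθ₀,
          mul_lt_mul_of_pos_left hFx (sub_pos.2 hθ₁)])
      exact lt_irrefl c hmem.2
    have hmem := hF (y, s) ⟨hys, hsc⟩ (by rw [hpq]; exact hysu)
    exact ⟨hmem.2, hmem.1⟩
  have haffine : ∀ y, ((⟪-(q⁻¹ • p), y⟫_ℝ + q⁻¹ * u : ℝ) : EReal) ≤ g y := by
    intro y
    by_contra! hgy
    have hgy' : ((g y).toReal : EReal) = g y := EReal.coe_toReal hgy.ne_top (hnebot y)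
    rw [← hgy', EReal.coe_lt_coe_iff, inner_neg_left, real_inner_smul_left] at hgy
    have hval : ⟪p, y⟫_ℝ + q * (g y).toReal < u := by
      have := mul_lt_mul_of_pos_left hgy hq
      field_simp at this
      linarith
    obtain ⟨hlt_c, hc_lt⟩ := hslice y (g y).toReal (hgy'.symm ▸ hle y) hval
    rw [← hgy', EReal.coe_lt_coe_iff] at hc_lt
    exact lt_asymm hlt_c hc_lt
  have hbound := coe_le_legendre_legendre_of_affine_le g _ _ haffine x
  rw [hr, EReal.coe_le_coe_iff, inner_neg_left, real_inner_smul_left] at hbound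
  have := mul_le_mul_of_nonneg_left hbound hq.le
  field_simp at this
  linarith
end
end
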